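/- Let n ≥ 3 be an integer and let φ be a C² function on the closed upper half-space {(z,t) : z ∈ ℝ^{n-1}, t ≥ 0} such that ∫_{ℝ^n_+} (φ² + |∇φ|²) < ∞, Δφ = 0 on the open half-space ℝ^n_+, and ∂φ/∂t(z,0) + n · U(z,0)^{2/(n-2)} · φ(z,0) = 0 for every z ∈ ℝ^{n-1}. Then there exist real numbers c_1, …, c_n such that φ = Σ_{b=1}^{n} c_b · j_b on ℝ^n_+. -/

import Mathlib

open MeasureTheory

noncomputable section

/-- Points of the upper half-space: a pair `(z, t)` with `z ∈ ℝ^{n-1}`, `t ∈ ℝ`. -/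
abbrev Pt (n : ℕ) := EuclideanSpace ℝ (Fin (n - 1)) × ℝ

/-- The standard bubble `U(z,t) = ((1+t)^2 + |z|^2)^{-(n-2)/2}`. -/
def stdBubble (n : ℕ) (p : Pt n) : ℝ :=
  ((1 + p.2) ^ 2 + ‖p.1‖ ^ 2) ^ (-(((n : ℝ) - 2) / 2))

/-- Directional (partial) derivative of `f` at `x` in the direction `v`. -/
def pd {E : Type*} [NormedAddCommGroup E] [NormedSpace ℝ E]
    (v : E) (f : E → ℝ) (x : E) : ℝ :=
  fderiv ℝ f x v

/-- The `i`-th horizontal coordinate direction. -/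
def ez (n : ℕ) (i : Fin (n - 1)) : Pt n := (EuclideanSpace.single i 1, 0)

/-- The vertical (`t`) coordinate direction. -/
def et (n : ℕ) : Pt n := (0, 1)

/-- The Euclidean Laplacian `Δf = Σ_i ∂²f/∂z_i² + ∂²f/∂t²`. -/
def lap (n : ℕ) (f : Pt n → ℝ) (p : Pt n) : ℝ :=
  (∑ i : Fin (n - 1), pd (ez n i) (pd (ez n i) f) p) + pd (et n) (pd (et n) f) p

/-- `j_n = ((n-2)/2) U + Σ_{a=1}^n y_a ∂U/∂y_a`, where `y = (z,t)`. -/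
def jlast (n : ℕ) (p : Pt n) : ℝ :=
  (((n : ℝ) - 2) / 2) * stdBubble n p +
    ((∑ i : Fin (n - 1), p.1 i * pd (ez n i) (stdBubble n) p) +
      p.2 * pd (et n) (stdBubble n) p)

/-- The open upper half-space. -/
def upperHalf (n : ℕ) : Set (Pt n) := {p | 0 < p.2}

/-!
The field `X = (2tz, t² - |z|² - 1)` is conformal and corresponds, under the Cayley transform of the
half-space onto the unit ball, to twice the radial field `r ∂/∂r`. In the ball the `j_b` become the
coordinate functions, and the boundary condition on `φ` says that the Kelvin transform `v` of `φ`
satisfies `∂v/∂r = v` on the sphere. As `r ∂v/∂r - v` is again harmonic, it should vanish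
identically; then `v` is homogeneous of degree one and differentiable at the origin, hence linear.

In the half-space `r ∂v/∂r - v` becomes `w = Xφ + ((n - 2)t - n)φ`, which has to be treated weakly:
it involves first derivatives of `φ`, which is only `C²` up to the boundary. Testing against the
adjoint operator shows that `w` is weakly harmonic with zero boundary values. Finite energy controls
its growth, and a Liouville argument gives `w = 0`: the averages of `w` against the odd reflection
of a radial bump of width `1 / l` do not depend on `l` and tend to `0` as `l → 0`.
-/

open Filter Topology Asymptotics Metric
open scoped ContDiff

section DirectionalDerivative

variable {E : Type*} [NormedAddCommGroup E] [NormedSpace ℝ E] {f g : E → ℝ} {x : E}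

theorem contDiff_pd (hf : ContDiff ℝ ∞ f) (v : E) : ContDiff ℝ ∞ (pd v f) :=
  (hf.fderiv_right (by simp)).clm_apply contDiff_const

theorem pd_add (hf : DifferentiableAt ℝ f x) (hg : DifferentiableAt ℝ g x) (v : E) :
    pd v (fun y => f y + g y) x = pd v f x + pd v g x := by
  simp [pd, fderiv_fun_add hf hg]

theorem pd_sub (hf : DifferentiableAt ℝ f x) (hg : DifferentiableAt ℝ g x) (v : E) :
    pd v (fun y => f y - g y) x = pd v f x - pd v g x := by
  simp [pd, fderiv_fun_sub hf hg]

theorem pd_mul (hf : DifferentiableAt ℝ f x) (hg : DifferentiableAt ℝ g x) (v : E) :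
    pd v (fun y => f y * g y) x = f x * pd v g x + pd v f x * g x := by
  simp [pd, fderiv_fun_mul hf hg, mul_comm]

theorem pd_const_mul (hf : DifferentiableAt ℝ f x) (c : ℝ) (v : E) :
    pd v (fun y => c * f y) x = c * pd v f x := by
  simp [pd, fderiv_const_mul hf]

theorem pd_sum {ι : Type*} {s : Finset ι} {f : ι → E → ℝ}
    (hf : ∀ i ∈ s, DifferentiableAt ℝ (f i) x) (v : E) :
    pd v (fun y => ∑ i ∈ s, f i y) x = ∑ i ∈ s, pd v (f i) x := by
  simp [pd, fderiv_fun_sum hf]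

theorem pd_fderiv_apply {X : E → E} (hf : ContDiffAt ℝ 2 f x) (hX : DifferentiableAt ℝ X x)
    (v : E) :
    pd v (fun y => fderiv ℝ f y (X y)) x =
      fderiv ℝ (pd v f) x (X x) + fderiv ℝ f x (fderiv ℝ X x v) := by
  have hdf : DifferentiableAt ℝ (fderiv ℝ f) x :=
    (hf.fderiv_right (m := 1) (by norm_num)).differentiableAt one_ne_zero
  have hsymm : IsSymmSndFDerivAt ℝ f x := hf.isSymmSndFDerivAt (by simp)
  have hpd : fderiv ℝ (pd v f) x (X x) = fderiv ℝ (fderiv ℝ f) x (X x) v := by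
    unfold pd
    simp [fderiv_clm_apply hdf (differentiableAt_const v)]
  rw [hpd, hsymm.eq, pd, fderiv_clm_apply hdf hX]
  simp [add_comm]

theorem pd_comm (hf : ContDiffAt ℝ 2 f x) (v w : E) : pd v (pd w f) x = pd w (pd v f) x :=
  (pd_fderiv_apply hf (differentiableAt_const w) v).trans (by simp [pd])

theorem support_pd_subset (v : E) (f : E → ℝ) : Function.support (pd v f) ⊆ tsupport f :=
  fun x hx => support_fderiv_subset ℝ fun h => hx (by simp [pd, h])

theorem tsupport_pd_subset (v : E) (f : E → ℝ) : tsupport (pd v f) ⊆ tsupport f :=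
  closure_minimal (support_pd_subset v f) (isClosed_tsupport f)

end DirectionalDerivative

section Coordinates

variable {n : ℕ}

/-- The standard basis of `ℝ^n`, with `none` indexing the vertical direction. -/
def frame (n : ℕ) (a : Option (Fin (n - 1))) : Pt n := a.elim (et n) (ez n)

/-- The coordinate functionals of `ℝ^n`, dual to `frame`. -/
def coord (n : ℕ) (a : Option (Fin (n - 1))) : Pt n →L[ℝ] ℝ :=
  a.elim (.snd ℝ _ ℝ) fun i => (EuclideanSpace.proj i).comp (.fst ℝ _ ℝ)

theorem coord_none (p : Pt n) : coord n none p = p.2 := rfl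

theorem coord_some (i : Fin (n - 1)) (p : Pt n) : coord n (some i) p = p.1 i := rfl

theorem coord_frame (a b : Option (Fin (n - 1))) :
    coord n a (frame n b) = if a = b then 1 else 0 := by
  rcases a with _ | i <;> rcases b with _ | j <;>
    simp [coord_none, coord_some, frame, et, ez]

theorem coord_et (a : Option (Fin (n - 1))) : coord n a (et n) = (frame n a).2 := by
  rcases a with _ | _ <;> simp [coord_none, coord_some, frame, et, ez]

theorem sum_coord_smul_frame (p : Pt n) : ∑ a, coord n a p • frame n a = p := by
  rw [Fintype.sum_option]
  ext _
  · simp [coord_none, coord_some, frame, et, ez, Prod.fst_sum, Finset.sum_apply, Pi.single_apply]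
  · simp [coord_none, coord_some, frame, et, ez, Prod.snd_sum]

theorem sum_coord_mul_map_frame (A : Pt n →L[ℝ] ℝ) (v : Pt n) :
    ∑ a, coord n a v * A (frame n a) = A v := by
  conv_rhs => rw [← sum_coord_smul_frame v]
  simp [map_sum]

theorem sum_frame_snd_mul (g : Option (Fin (n - 1)) → ℝ) :
    ∑ a, (frame n a).2 * g a = g none := by
  simp [Fintype.sum_option, frame, et, ez]

theorem card_frame (hn : n ≠ 0) : (Fintype.card (Option (Fin (n - 1))) : ℝ) = n := by
  rw [Fintype.card_option, Fintype.card_fin, Nat.sub_add_cancel (Nat.one_le_iff_ne_zero.2 hn)]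

theorem lap_eq_sum_frame (f : Pt n → ℝ) (p : Pt n) :
    lap n f p = ∑ a, pd (frame n a) (pd (frame n a) f) p := by
  rw [Fintype.sum_option, lap, add_comm]
  rfl

theorem contDiff_lap {f : Pt n → ℝ} (hf : ContDiff ℝ ∞ f) : ContDiff ℝ ∞ (lap n f) := by
  rw [funext (lap_eq_sum_frame f)]
  exact ContDiff.sum fun a _ => contDiff_pd (contDiff_pd hf _) _

theorem support_lap_subset (f : Pt n → ℝ) : Function.support (lap n f) ⊆ tsupport f := by
  intro p hp
  rw [Function.mem_support, lap_eq_sum_frame] at hp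
  obtain ⟨a, -, ha⟩ := Finset.exists_ne_zero_of_sum_ne_zero hp
  exact tsupport_pd_subset _ _ (support_pd_subset _ _ ha)

theorem lap_add {f g : Pt n → ℝ} (hf : ContDiff ℝ ∞ f) (hg : ContDiff ℝ ∞ g) (p : Pt n) :
    lap n (fun y => f y + g y) p = lap n f p + lap n g p := by
  simp only [lap_eq_sum_frame, ← Finset.sum_add_distrib]
  refine Finset.sum_congr rfl fun a _ => ?_
  have hpd : pd (frame n a) (fun y => f y + g y) =
      fun y => pd (frame n a) f y + pd (frame n a) g y :=
    funext fun y => pd_add (hf.differentiable (by simp) y) (hg.differentiable (by simp) y) _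
  rw [hpd, pd_add ((contDiff_pd hf _).differentiable (by simp) p)
    ((contDiff_pd hg _).differentiable (by simp) p)]

theorem lap_affine_mul {f : Pt n → ℝ} (hf : ContDiff ℝ ∞ f) (a b : ℝ) (p : Pt n) :
    lap n (fun y => (a * y.2 + b) * f y) p =
      (a * p.2 + b) * lap n f p + 2 * a * pd (et n) f p := by
  have hpd {g : Pt n → ℝ} (hg : ContDiff ℝ ∞ g) (v : Pt n) :
      pd v (fun y => (a * y.2 + b) * g y) = fun y => (a * y.2 + b) * pd v g y + a * v.2 * g y := by
    funext y
    have haff : HasFDerivAt (fun y : Pt n => a * y.2 + b) (a • .snd ℝ _ ℝ) y :=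
      (hasFDerivAt_snd.const_mul a).add_const b
    have hslope : pd v (fun y : Pt n => a * y.2 + b) y = a * v.2 := by simp [pd, haff.fderiv]
    rw [pd_mul haff.differentiableAt (hg.differentiable (by simp) y), hslope]
  have hterm (v : Pt n) : pd v (pd v fun y => (a * y.2 + b) * f y) p =
      (a * p.2 + b) * pd v (pd v f) p + 2 * a * (v.2 * pd v f p) := by
    have hdf : DifferentiableAt ℝ f p := hf.differentiable (by simp) p
    have hdpd : DifferentiableAt ℝ (pd v f) p := (contDiff_pd hf v).differentiable (by simp) p
    rw [hpd hf, pd_add (by fun_prop) (by fun_prop), hpd (contDiff_pd hf v), pd_const_mul hdf]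
    ring
  have hsum : ∑ i, (frame n i).2 * pd (frame n i) f p = pd (et n) f p :=
    sum_frame_snd_mul _
  simp only [lap_eq_sum_frame, hterm, Finset.sum_add_distrib, ← Finset.mul_sum, hsum]

/-- The squared Euclidean norm of `ℝ^n`; the norm of the product type `Pt n` is the maximum of the
norms of the components. -/
def sqNorm (n : ℕ) (p : Pt n) : ℝ := ‖p.1‖ ^ 2 + p.2 ^ 2

theorem sqNorm_eq_sum (p : Pt n) : sqNorm n p = ∑ a, coord n a p ^ 2 := by
  rw [Fintype.sum_option, sqNorm, EuclideanSpace.norm_sq_eq, add_comm]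
  simp [coord_none, coord_some]

theorem contDiff_sqNorm : ContDiff ℝ ∞ (sqNorm n) :=
  ((contDiff_norm_sq ℝ).comp contDiff_fst).add (contDiff_snd.pow 2)

theorem pd_sqNorm (v p : Pt n) :
    pd v (sqNorm n) p = 2 * (inner ℝ p.1 v.1 + p.2 * v.2) := by
  have h : HasFDerivAt (sqNorm n) _ p := hasFDerivAt_fst.norm_sq.fun_add (hasFDerivAt_snd.pow 2)
  rw [pd, h.fderiv]
  simp
  ring

theorem pd_frame_sqNorm (a : Option (Fin (n - 1))) (p : Pt n) :
    pd (frame n a) (sqNorm n) p = 2 * coord n a p := by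
  rcases a with _ | i
  · simp [pd_sqNorm, frame, et, coord_none]
  · simp [pd_sqNorm, frame, ez, coord_some, EuclideanSpace.inner_single_right]

end Coordinates

section ConformalField

variable {n : ℕ}

/-- The conformal vector field of the half-space whose transport to the unit ball by the Cayley map
is a multiple of the radial field. -/
def conformalField (n : ℕ) (p : Pt n) : Pt n := ((2 * p.2) • p.1, p.2 ^ 2 - ‖p.1‖ ^ 2 - 1)

theorem conformalField_eq (p : Pt n) :
    conformalField n p = (2 * p.2) • p - (sqNorm n p + 1) • et n := by
  ext i
  · simp [conformalField, et]
  · simp [conformalField, et, sqNorm]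
    ring

theorem contDiff_conformalField : ContDiff ℝ ∞ (conformalField n) := by
  have hN : ContDiff ℝ ∞ (sqNorm n) := contDiff_sqNorm
  rw [funext (conformalField_eq (n := n))]
  fun_prop

theorem fderiv_conformalField (p v : Pt n) :
    fderiv ℝ (conformalField n) p v =
      (2 * p.2) • v + (2 * v.2) • p - pd v (sqNorm n) p • et n := by
  have hN : HasFDerivAt (sqNorm n) (fderiv ℝ (sqNorm n) p) p :=
    (contDiff_sqNorm.differentiable (by simp) p).hasFDerivAt
  have hX := (((hasFDerivAt_snd (p := p)).const_mul (2 : ℝ)).fun_smul (hasFDerivAt_id p)).fun_sub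
    ((hN.add_const 1).smul_const (et n))
  rw [funext (conformalField_eq (n := n))]
  refine (congrArg (· v) hX.fderiv).trans ?_
  simp [pd]

theorem coord_fderiv_conformalField_frame (a : Option (Fin (n - 1))) (p : Pt n) :
    coord n a (fderiv ℝ (conformalField n) p (frame n a)) = 2 * p.2 := by
  simp only [fderiv_conformalField, pd_frame_sqNorm, map_sub, map_add, map_smul, coord_frame,
    coord_et, smul_eq_mul, if_true]
  ring

theorem fderiv_fderiv_conformalField_frame (a : Option (Fin (n - 1))) (p : Pt n) :
    fderiv ℝ (fun y => fderiv ℝ (conformalField n) y (frame n a)) p (frame n a) =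
      (4 * (frame n a).2) • frame n a - (2 : ℝ) • et n := by
  have hX : (fun y => fderiv ℝ (conformalField n) y (frame n a)) = fun y =>
      (2 * y.2) • frame n a + (2 * (frame n a).2) • y - (2 * coord n a y) • et n := by
    funext y
    rw [fderiv_conformalField, pd_frame_sqNorm]
  have hX' := (((hasFDerivAt_snd (p := p)).const_mul (2 : ℝ)).smul_const (frame n a)).fun_add
    ((hasFDerivAt_id p).fun_const_smul (2 * (frame n a).2)) |>.fun_sub
    (((coord n a).hasFDerivAt.const_mul (2 : ℝ)).smul_const (et n))
  rw [hX]
  refine (congrArg (· (frame n a)) hX'.fderiv).trans ?_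
  simp only [sub_apply, add_apply, smul_apply, ContinuousLinearMap.smulRight_apply,
    ContinuousLinearMap.coe_snd', ContinuousLinearMap.id_apply, coord_frame, if_true, smul_eq_mul]
  module

theorem pd_pd_fderiv_conformalField {f : Pt n → ℝ} (hf : ContDiff ℝ ∞ f)
    (a : Option (Fin (n - 1))) (p : Pt n) :
    pd (frame n a) (pd (frame n a) fun y => fderiv ℝ f y (conformalField n y)) p =
      fderiv ℝ (pd (frame n a) (pd (frame n a) f)) p (conformalField n p) +
        4 * p.2 * pd (frame n a) (pd (frame n a) f) p +
        4 * ((frame n a).2 * fderiv ℝ (pd (frame n a) f) p p) -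
        4 * (coord n a p * pd (frame n a) (pd (et n) f) p) +
        4 * ((frame n a).2 * pd (frame n a) f p) - 2 * pd (et n) f p := by
  have hfp (y : Pt n) : ContDiffAt ℝ 2 f y := (contDiff_infty.1 hf 2).contDiffAt
  have hpd : ContDiffAt ℝ 2 (pd (frame n a) f) p :=
    (contDiff_infty.1 (contDiff_pd hf _) 2).contDiffAt
  have hX : Differentiable ℝ (conformalField n) := contDiff_conformalField.differentiable (by simp)
  have hX' : ContDiff ℝ ∞ fun y => fderiv ℝ (conformalField n) y (frame n a) :=
    (contDiff_conformalField.fderiv_right (by simp)).clm_apply contDiff_const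
  have hf₁ : ContDiff ℝ ∞ fun y => fderiv ℝ (pd (frame n a) f) y (conformalField n y) :=
    ((contDiff_pd hf _).fderiv_right (by simp)).clm_apply contDiff_conformalField
  have hf₂ : ContDiff ℝ ∞ fun y => fderiv ℝ f y (fderiv ℝ (conformalField n) y (frame n a)) :=
    (hf.fderiv_right (by simp)).clm_apply hX'
  have hcomm : fderiv ℝ (pd (frame n a) f) p (et n) = pd (frame n a) (pd (et n) f) p :=
    pd_comm (hfp p) _ _
  rw [funext fun y => pd_fderiv_apply (hfp y) (hX y) (frame n a),
    pd_add (hf₁.differentiable (by simp) p) (hf₂.differentiable (by simp) p),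
    pd_fderiv_apply hpd (hX p), pd_fderiv_apply (hfp p) (hX'.differentiable (by simp) p),
    fderiv_fderiv_conformalField_frame, fderiv_conformalField, pd_frame_sqNorm]
  simp only [map_sub, map_add, map_smul, smul_eq_mul, hcomm]
  simp only [pd]
  ring

theorem lap_fderiv_conformalField (hn : n ≠ 0) {f : Pt n → ℝ} (hf : ContDiff ℝ ∞ f) (p : Pt n) :
    lap n (fun y => fderiv ℝ f y (conformalField n y)) p =
      fderiv ℝ (lap n f) p (conformalField n p) + 4 * p.2 * lap n f p +
        (4 - 2 * n) * pd (et n) f p := by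
  have hlap : fderiv ℝ (lap n f) p (conformalField n p) =
      ∑ a, fderiv ℝ (pd (frame n a) (pd (frame n a) f)) p (conformalField n p) := by
    rw [funext (lap_eq_sum_frame f)]
    exact pd_sum (fun a _ => (contDiff_pd (contDiff_pd hf _) _).differentiable (by simp) p) _
  have hEuler : ∑ a, coord n a p * pd (frame n a) (pd (et n) f) p = fderiv ℝ (pd (et n) f) p p :=
    sum_coord_mul_map_frame _ _
  simp only [lap_eq_sum_frame _ p, pd_pd_fderiv_conformalField hf, hlap,
    Finset.sum_add_distrib, Finset.sum_sub_distrib, ← Finset.mul_sum, sum_frame_snd_mul, hEuler,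
    Finset.sum_const, Finset.card_univ, nsmul_eq_mul, card_frame hn]
  simp only [frame, Option.elim_none]
  ring

/-- The zeroth order perturbation `η ↦ Xη + ((n - 2)t + b)η` of the conformal field, which commutes
with the Laplacian up to a multiple of the Laplacian. -/
def conformalDeriv (n : ℕ) (b : ℝ) (η : Pt n → ℝ) (p : Pt n) : ℝ :=
  fderiv ℝ η p (conformalField n p) + ((n - 2) * p.2 + b) * η p

theorem contDiff_conformalDeriv {η : Pt n → ℝ} (hη : ContDiff ℝ ∞ η) (b : ℝ) :
    ContDiff ℝ ∞ (conformalDeriv n b η) :=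
  ((hη.fderiv_right (by simp)).clm_apply contDiff_conformalField).add
    (((contDiff_const.mul contDiff_snd).add contDiff_const).mul hη)

theorem support_conformalDeriv_subset (b : ℝ) (η : Pt n → ℝ) :
    Function.support (conformalDeriv n b η) ⊆ tsupport η := by
  intro p hp
  by_contra hpη
  exact hp (by
    simp [conformalDeriv, image_eq_zero_of_notMem_tsupport hpη, fderiv_of_notMem_tsupport ℝ hpη])

theorem lap_conformalDeriv (hn : n ≠ 0) {η : Pt n → ℝ} (hη : ContDiff ℝ ∞ η) (b : ℝ) (p : Pt n) :
    lap n (conformalDeriv n b η) p =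
      fderiv ℝ (lap n η) p (conformalField n p) + ((n + 2) * p.2 + b) * lap n η p := by
  have hX : ContDiff ℝ ∞ fun y => fderiv ℝ η y (conformalField n y) :=
    (hη.fderiv_right (by simp)).clm_apply contDiff_conformalField
  have haff : ContDiff ℝ ∞ fun y : Pt n => ((n - 2 : ℝ) * y.2 + b) * η y := by fun_prop
  have hsplit := lap_add hX haff p
  rw [lap_fderiv_conformalField hn hη, lap_affine_mul hη] at hsplit
  refine hsplit.trans ?_
  ring

end ConformalField

theorem integral_fderiv_apply_eq_zero {E : Type*} [NormedAddCommGroup E] [NormedSpace ℝ E]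
    [FiniteDimensional ℝ E] [MeasurableSpace E] [BorelSpace E] {μ : Measure E} [μ.IsAddHaarMeasure]
    {f : E → ℝ} (hf : ContDiff ℝ 1 f) (hc : HasCompactSupport f) (v : E) :
    ∫ x, fderiv ℝ f x v ∂μ = 0 := by
  have hcont : Continuous fun x => fderiv ℝ f x v :=
    (hf.continuous_fderiv one_ne_zero).clm_apply continuous_const
  simpa using integral_smul_fderiv_eq_neg_fderiv_smul_of_integrable (𝕜 := ℝ) (μ := μ)
    (f := fun _ : E => (1 : ℝ)) (g := f) (v := v) (by simp)
    (by simpa using hcont.integrable_of_hasCompactSupport (hc.fderiv_apply ℝ v))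
    (by simpa using hf.continuous.integrable_of_hasCompactSupport hc) (by simp)
    fun x _ => hf.differentiable one_ne_zero x

section HalfSpace

variable {n : ℕ}

/-- The closed upper half-space. -/
def closedHalf (n : ℕ) : Set (Pt n) := {p | 0 ≤ p.2}

theorem isOpen_upperHalf : IsOpen (upperHalf n) := isOpen_lt continuous_const continuous_snd

theorem isClosed_closedHalf : IsClosed (closedHalf n) := isClosed_le continuous_const continuous_snd

theorem upperHalf_subset_closedHalf : upperHalf n ⊆ closedHalf n := fun _ => le_of_lt (a := (0 : ℝ))

theorem closedHalf_mem_nhds {p : Pt n} (hp : p ∈ upperHalf n) : closedHalf n ∈ 𝓝 p :=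
  mem_of_superset (isOpen_upperHalf.mem_nhds hp) upperHalf_subset_closedHalf

theorem uniqueDiffOn_closedHalf : UniqueDiffOn ℝ (closedHalf n) := by
  refine uniqueDiffOn_convex (convex_halfSpace_ge ⟨fun _ _ => rfl, fun _ _ => rfl⟩ 0) ⟨et n, ?_⟩
  exact isOpen_upperHalf.subset_interior_iff.2 upperHalf_subset_closedHalf
    (by simp [upperHalf, et])

theorem upperHalf_eq_prod : upperHalf n = Set.univ ×ˢ Set.Ioi (0 : ℝ) := by
  ext p
  simp [upperHalf]

theorem pd_eq_fderivWithin (q : Pt n → ℝ) (v : Pt n) {p : Pt n} (hp : p ∈ upperHalf n) :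
    pd v q p = fderivWithin ℝ q (closedHalf n) p v := by
  rw [pd, fderivWithin_of_mem_nhds (closedHalf_mem_nhds hp)]

theorem integrableOn_upperHalf_of_continuousOn {q : Pt n → ℝ} (hq : ContinuousOn q (closedHalf n))
    {K : Set (Pt n)} (hK : IsCompact K) (hqK : Function.support q ⊆ K) :
    IntegrableOn q (upperHalf n) := by
  have hint : IntegrableOn q (K ∩ closedHalf n) :=
    (hq.mono Set.inter_subset_right).integrableOn_compact (hK.inter_right isClosed_closedHalf)
  refine (hint.of_forall_sdiff_eq_zero isClosed_closedHalf.measurableSet ?_).mono_set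
    upperHalf_subset_closedHalf
  exact fun p hp => Function.notMem_support.1 fun hpq => hp.2 ⟨hqK hpq, hp.1⟩

variable {q : Pt n → ℝ}

theorem contDiffAt_of_contDiffOn_closedHalf {k : WithTop ℕ∞} (hq : ContDiffOn ℝ k q (closedHalf n))
    {p : Pt n} (hp : p ∈ upperHalf n) : ContDiffAt ℝ k q p :=
  hq.contDiffAt (closedHalf_mem_nhds hp)

theorem integrableOn_pd (hq : ContDiffOn ℝ 1 q (closedHalf n)) (hc : HasCompactSupport q)
    (v : Pt n) : IntegrableOn (pd v q) (upperHalf n) := by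
  have hcont : ContinuousOn (fun p => fderivWithin ℝ q (closedHalf n) p v) (closedHalf n) :=
    (hq.continuousOn_fderivWithin uniqueDiffOn_closedHalf le_rfl).clm_apply continuousOn_const
  have hsupp : Function.support (fun p => fderivWithin ℝ q (closedHalf n) p v) ⊆ tsupport q := by
    intro p hp
    by_contra hpq
    have hzero : q =ᶠ[𝓝 p] fun _ => 0 := notMem_tsupport_iff_eventuallyEq.1 hpq
    exact hp (by simp [(hzero.filter_mono nhdsWithin_le_nhds).fderivWithin_eq hzero.eq_of_nhds])
  exact (integrableOn_upperHalf_of_continuousOn hcont hc hsupp).congr_fun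
    (fun p hp => (pd_eq_fderivWithin q v hp).symm) isOpen_upperHalf.measurableSet

theorem integral_Ioi_pd_et (hq : ContDiffOn ℝ 1 q (closedHalf n)) (hc : HasCompactSupport q)
    (z : EuclideanSpace ℝ (Fin (n - 1)))
    (hint : IntegrableOn (fun t => pd (et n) q (z, t)) (Set.Ioi 0)) :
    ∫ t in Set.Ioi (0 : ℝ), pd (et n) q (z, t) = -q (z, 0) := by
  have hcont : ContinuousWithinAt (fun t : ℝ => q (z, t)) (Set.Ici 0) 0 :=
    (hq.continuousOn (z, 0) (le_refl (0 : ℝ))).comp (t := closedHalf n) (by fun_prop) fun _ ht => ht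
  have hderiv (t : ℝ) (ht : t ∈ Set.Ioi 0) :
      HasDerivAt (fun t : ℝ => q (z, t)) (pd (et n) q (z, t)) t :=
    ((contDiffAt_of_contDiffOn_closedHalf hq ht).differentiableAt
      one_ne_zero).hasFDerivAt.comp_hasDerivAt t ((hasDerivAt_const t z).prodMk (hasDerivAt_id t))
  have hcs : HasCompactSupport fun t : ℝ => q (z, t) :=
    .of_support_subset_isCompact (hc.image continuous_snd) fun t ht =>
      ⟨(z, t), subset_tsupport q ht, rfl⟩
  have hlim : Tendsto (fun t : ℝ => q (z, t)) atTop (𝓝 0) :=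
    hcs.is_zero_at_infty.mono_left atTop_le_cocompact
  simpa using integral_Ioi_of_hasDerivAt_of_tendsto hcont hderiv hint hlim

theorem setIntegral_pd_et (hq : ContDiffOn ℝ 1 q (closedHalf n)) (hc : HasCompactSupport q) :
    ∫ p in upperHalf n, pd (et n) q p = -∫ z, q (z, 0) := by
  have hint := integrableOn_pd hq hc (et n)
  rw [upperHalf_eq_prod, Measure.volume_eq_prod] at hint ⊢
  rw [setIntegral_prod _ hint, setIntegral_univ, ← integral_neg]
  rw [IntegrableOn, ← Measure.prod_restrict, Measure.restrict_univ] at hint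
  refine integral_congr_ae ?_
  filter_upwards [hint.prod_right_ae] with z hz
  exact integral_Ioi_pd_et hq hc z hz

theorem setIntegral_pd_ez (hq : ContDiffOn ℝ 1 q (closedHalf n)) (hc : HasCompactSupport q)
    (i : Fin (n - 1)) : ∫ p in upperHalf n, pd (ez n i) q p = 0 := by
  have hint := integrableOn_pd hq hc (ez n i)
  rw [upperHalf_eq_prod, Measure.volume_eq_prod] at hint ⊢
  rw [IntegrableOn, ← Measure.prod_restrict] at hint
  rw [← Measure.prod_restrict, integral_prod_symm _ hint, Measure.restrict_univ]
  refine setIntegral_eq_zero_of_forall_eq_zero fun t ht => ?_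
  have hslice (z : EuclideanSpace ℝ (Fin (n - 1))) : ContDiffAt ℝ 1 q (z, t) :=
    contDiffAt_of_contDiffOn_closedHalf hq ht
  have hderiv (z : EuclideanSpace ℝ (Fin (n - 1))) :
      pd (ez n i) q (z, t) = fderiv ℝ (fun z => q (z, t)) z (EuclideanSpace.single i 1) := by
    have hcomp : HasFDerivAt (fun z => q (z, t)) ((fderiv ℝ q (z, t)).comp (.inl ℝ _ ℝ)) z :=
      ((hslice z).differentiableAt one_ne_zero).hasFDerivAt.comp z (hasFDerivAt_prodMk_left z t)
    exact (congrArg (· (EuclideanSpace.single i 1)) hcomp.fderiv).symm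
  simp only [hderiv]
  refine integral_fderiv_apply_eq_zero (contDiff_iff_contDiffAt.2 fun z => ?_) ?_ _
  · exact (hslice z).comp z (contDiffAt_id.prodMk contDiffAt_const)
  · exact .of_support_subset_isCompact (hc.image continuous_fst) fun z hz =>
      ⟨(z, t), subset_tsupport q hz, rfl⟩

theorem setIntegral_divergence {V : Option (Fin (n - 1)) → Pt n → ℝ}
    (hV : ∀ a, ContDiffOn ℝ 1 (V a) (closedHalf n)) (hc : ∀ a, HasCompactSupport (V a)) :
    ∫ p in upperHalf n, ∑ a, pd (frame n a) (V a) p = -∫ z, V none (z, 0) := by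
  rw [integral_finsetSum _ fun a _ => integrableOn_pd (hV a) (hc a) _, Fintype.sum_option]
  simp [frame, setIntegral_pd_et (hV none) (hc none), setIntegral_pd_ez (hV _) (hc _)]

end HalfSpace

section BoundaryValues

variable {n : ℕ} {η : Pt n → ℝ} (z : EuclideanSpace ℝ (Fin (n - 1)))

theorem conformalField_boundary : conformalField n (z, 0) = (-(1 + ‖z‖ ^ 2)) • et n := by
  ext i
  · simp [conformalField, et]
  · simp [conformalField, et]
    ring

theorem fderiv_apply_boundary (hη : Differentiable ℝ η) (h0 : ∀ z, η (z, 0) = 0) (v : Pt n) :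
    fderiv ℝ η (z, 0) v = v.2 * pd (et n) η (z, 0) := by
  have hslice : HasFDerivAt (fun z => η (z, 0)) ((fderiv ℝ η (z, 0)).comp (.inl ℝ _ ℝ)) z :=
    (hη (z, 0)).hasFDerivAt.comp z (hasFDerivAt_prodMk_left z 0)
  have hconst : HasFDerivAt (fun z => η (z, 0))
      (0 : EuclideanSpace ℝ (Fin (n - 1)) →L[ℝ] ℝ) z := by
    simpa only [h0] using hasFDerivAt_const (0 : ℝ) z
  have hhor : fderiv ℝ η (z, 0) (v.1, 0) = 0 := congrArg (fun A => A v.1) (hslice.unique hconst)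
  have hv : v = (v.1, 0) + v.2 • et n := by ext <;> simp [et]
  conv_lhs => rw [hv]
  rw [map_add, map_smul, hhor, zero_add]
  rfl

theorem lap_boundary (hη : ContDiff ℝ ∞ η) (h0 : ∀ z, η (z, 0) = 0) :
    lap n η (z, 0) = pd (et n) (pd (et n) η) (z, 0) := by
  have hpd (i : Fin (n - 1)) (z) : pd (ez n i) η (z, 0) = 0 := by
    rw [pd, fderiv_apply_boundary z (hη.differentiable (by simp)) h0]
    simp [ez]
  have hpdpd (i : Fin (n - 1)) : pd (ez n i) (pd (ez n i) η) (z, 0) = 0 := by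
    rw [pd, fderiv_apply_boundary z ((contDiff_pd hη _).differentiable (by simp)) (hpd i)]
    simp [ez]
  simp [lap, hpdpd]

theorem conformalDeriv_boundary (h0 : ∀ z, η (z, 0) = 0) (b : ℝ) :
    conformalDeriv n b η (z, 0) = -(1 + ‖z‖ ^ 2) * pd (et n) η (z, 0) := by
  simp [conformalDeriv, conformalField_boundary, h0, pd]

theorem pd_et_conformalDeriv_boundary (hη : ContDiff ℝ ∞ η) (h0 : ∀ z, η (z, 0) = 0) (b : ℝ) :
    pd (et n) (conformalDeriv n b η) (z, 0) =
      -(1 + ‖z‖ ^ 2) * pd (et n) (pd (et n) η) (z, 0) + b * pd (et n) η (z, 0) := by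
  have hdη : Differentiable ℝ η := hη.differentiable (by simp)
  have hX : ContDiff ℝ ∞ fun y => fderiv ℝ η y (conformalField n y) :=
    (hη.fderiv_right (by simp)).clm_apply contDiff_conformalField
  have hX_pd : pd (et n) (fun y => fderiv ℝ η y (conformalField n y)) (z, 0) =
      -(1 + ‖z‖ ^ 2) * pd (et n) (pd (et n) η) (z, 0) := by
    have hX' : (fderiv ℝ (conformalField n) (z, 0) (et n)).2 = 0 := by
      have hN := pd_frame_sqNorm (n := n) none (z, 0)
      rw [coord_none, mul_zero] at hN
      simp [fderiv_conformalField, show pd (et n) (sqNorm n) (z, 0) = 0 from hN]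
    rw [pd_fderiv_apply (contDiff_infty.1 hη 2).contDiffAt
      (contDiff_conformalField.differentiable (by simp) _), fderiv_apply_boundary z hdη h0, hX',
      conformalField_boundary, map_smul]
    simp [pd]
  have haff : pd (et n) (fun y : Pt n => ((n - 2) * y.2 + b) * η y) (z, 0) =
      b * pd (et n) η (z, 0) := by
    rw [pd_mul (by fun_prop) (hdη _), h0]
    simp
  rw [← hX_pd, ← haff]
  exact pd_add (hX.differentiable (by simp) _) (by fun_prop) _

end BoundaryValues

section WeakEquation

variable {n : ℕ}

/-- The flux `ξ∇φ - φ∇ξ` of Green's second identity. -/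
def greenField (n : ℕ) (φ ξ : Pt n → ℝ) (a : Option (Fin (n - 1))) (p : Pt n) : ℝ :=
  ξ p * fderivWithin ℝ φ (closedHalf n) p (frame n a) - φ p * pd (frame n a) ξ p

theorem contDiffOn_greenField {φ ξ : Pt n → ℝ} (hφ : ContDiffOn ℝ 2 φ (closedHalf n))
    (hξ : ContDiff ℝ ∞ ξ) (a : Option (Fin (n - 1))) :
    ContDiffOn ℝ 1 (greenField n φ ξ a) (closedHalf n) :=
  ((contDiff_infty.1 hξ 1).contDiffOn.mul ((hφ.fderivWithin uniqueDiffOn_closedHalf (m := 1)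
    (by norm_num)).clm_apply contDiffOn_const)).sub
      ((hφ.of_le (by norm_num)).mul (contDiff_infty.1 (contDiff_pd hξ _) 1).contDiffOn)

theorem hasCompactSupport_greenField {ξ : Pt n → ℝ} (hξ : HasCompactSupport ξ) (φ : Pt n → ℝ)
    (a : Option (Fin (n - 1))) : HasCompactSupport (greenField n φ ξ a) :=
  hξ.mul_right.sub (hξ.mono' (support_pd_subset _ ξ)).mul_left

theorem sum_pd_greenField {φ ξ : Pt n → ℝ} (hφ : ContDiffOn ℝ 2 φ (closedHalf n))
    (hξ : ContDiff ℝ ∞ ξ) {p : Pt n} (hp : p ∈ upperHalf n) :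
    ∑ a, pd (frame n a) (greenField n φ ξ a) p = ξ p * lap n φ p - φ p * lap n ξ p := by
  have hφp : ContDiffAt ℝ 2 φ p := contDiffAt_of_contDiffOn_closedHalf hφ hp
  have hdφ : DifferentiableAt ℝ φ p := hφp.differentiableAt two_ne_zero
  have hdξ : DifferentiableAt ℝ ξ p := hξ.differentiable (by simp) p
  have hterm (a : Option (Fin (n - 1))) : pd (frame n a) (greenField n φ ξ a) p =
      ξ p * pd (frame n a) (pd (frame n a) φ) p - φ p * pd (frame n a) (pd (frame n a) ξ) p := by
    have hpdφ : DifferentiableAt ℝ (pd (frame n a) φ) p :=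
      ((hφp.fderiv_right (m := 1) (by norm_num)).differentiableAt one_ne_zero).clm_apply
        (differentiableAt_const _)
    have hpdξ : DifferentiableAt ℝ (pd (frame n a) ξ) p :=
      (contDiff_pd hξ _).differentiable (by simp) p
    have hlocal : greenField n φ ξ a =ᶠ[𝓝 p]
        fun y => ξ y * pd (frame n a) φ y - φ y * pd (frame n a) ξ y := by
      filter_upwards [isOpen_upperHalf.mem_nhds hp] with y hy
      rw [greenField, pd_eq_fderivWithin φ _ hy]
    rw [pd, hlocal.fderiv_eq, ← pd, pd_sub (hdξ.fun_mul hpdφ) (hdφ.fun_mul hpdξ),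
      pd_mul hdξ hpdφ, pd_mul hdφ hpdξ]
    ring
  simp only [hterm, Finset.sum_sub_distrib, ← Finset.mul_sum, ← lap_eq_sum_frame]

theorem sum_pd_coord_conformalField_mul (hn : n ≠ 0) {u : Pt n → ℝ} {p : Pt n}
    (hu : DifferentiableAt ℝ u p) :
    ∑ a, pd (frame n a) (fun y => coord n a (conformalField n y) * u y) p =
      fderiv ℝ u p (conformalField n p) + 2 * n * p.2 * u p := by
  have hX : DifferentiableAt ℝ (conformalField n) p :=
    contDiff_conformalField.differentiable (by simp) p
  have hterm (a : Option (Fin (n - 1))) :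
      pd (frame n a) (fun y => coord n a (conformalField n y) * u y) p =
        coord n a (conformalField n p) * fderiv ℝ u p (frame n a) + 2 * p.2 * u p := by
    have hcoord : pd (frame n a) (fun y => coord n a (conformalField n y)) p = 2 * p.2 := by
      rw [← coord_fderiv_conformalField_frame a p, pd]
      exact congrArg (· (frame n a)) ((coord n a).hasFDerivAt.comp p hX.hasFDerivAt).fderiv
    rw [pd_mul (by fun_prop) hu, hcoord]
    rfl
  simp only [hterm, Finset.sum_add_distrib, sum_coord_mul_map_frame, Finset.sum_const,
    Finset.card_univ, nsmul_eq_mul, card_frame hn]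
  ring

/-- The function `w = Xφ + ((n - 2)t - n)φ`. If `v` is the transplantation of `φ / U` to the unit
ball, then `w / (2U)` corresponds to `r ∂v/∂r - v`. The one-sided derivative makes `w` continuous
up to the boundary. -/
def radialDefect (n : ℕ) (φ : Pt n → ℝ) (p : Pt n) : ℝ :=
  fderivWithin ℝ φ (closedHalf n) p (conformalField n p) + ((n - 2) * p.2 - n) * φ p

/-- `w` is harmonic in the half-space and vanishes on its boundary, in the very weak sense: all
derivatives are carried by the test functions. -/
def IsWeaklyDirichletHarmonic (n : ℕ) (w : Pt n → ℝ) : Prop :=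
  ∀ η : Pt n → ℝ, ContDiff ℝ ∞ η → HasCompactSupport η → (∀ z, η (z, 0) = 0) →
    ∫ p in upperHalf n, w p * lap n η p = 0

theorem radialDefect_mul_lap (hn : n ≠ 0) {φ η : Pt n → ℝ} (hφ : ContDiffOn ℝ 2 φ (closedHalf n))
    (hη : ContDiff ℝ ∞ η) {p : Pt n} (hp : p ∈ upperHalf n) (hharm : lap n φ p = 0) :
    radialDefect n φ p * lap n η p =
      ∑ a, pd (frame n a) (fun y => coord n a (conformalField n y) * (φ y * lap n η y) +
        greenField n φ (conformalDeriv n n η) a y) p := by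
  have hdφ : DifferentiableAt ℝ φ p :=
    (contDiffAt_of_contDiffOn_closedHalf hφ hp).differentiableAt two_ne_zero
  have hdlap : DifferentiableAt ℝ (lap n η) p := (contDiff_lap hη).differentiable (by simp) p
  have hX : DifferentiableAt ℝ (conformalField n) p :=
    contDiff_conformalField.differentiable (by simp) p
  have hgreen (a) : DifferentiableAt ℝ (greenField n φ (conformalDeriv n n η) a) p :=
    (contDiffAt_of_contDiffOn_closedHalf (contDiffOn_greenField hφ (contDiff_conformalDeriv hη n) a)
      hp).differentiableAt one_ne_zero
  have hprod : fderiv ℝ (fun y => φ y * lap n η y) p (conformalField n p) =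
      φ p * fderiv ℝ (lap n η) p (conformalField n p) +
        fderiv ℝ φ p (conformalField n p) * lap n η p := pd_mul hdφ hdlap _
  rw [Finset.sum_congr rfl fun a _ => pd_add (by fun_prop) (hgreen a) _, Finset.sum_add_distrib,
    sum_pd_coord_conformalField_mul hn (hdφ.fun_mul hdlap), hprod,
    sum_pd_greenField hφ (contDiff_conformalDeriv hη n) hp, hharm, lap_conformalDeriv hn hη,
    radialDefect, ← pd_eq_fderivWithin φ _ hp, pd]
  ring

theorem isWeaklyDirichletHarmonic_radialDefect (hn : n ≠ 0) {φ : Pt n → ℝ}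
    (hφ : ContDiffOn ℝ 2 φ (closedHalf n)) (hharm : ∀ p ∈ upperHalf n, lap n φ p = 0)
    (hbdry : ∀ z : EuclideanSpace ℝ (Fin (n - 1)),
      (1 + ‖z‖ ^ 2) * fderivWithin ℝ φ (closedHalf n) (z, 0) (et n) + n * φ (z, 0) = 0) :
    IsWeaklyDirichletHarmonic n (radialDefect n φ) := by
  intro η hη hc h0
  have hξ : ContDiff ℝ ∞ (conformalDeriv n n η) := contDiff_conformalDeriv hη n
  have hlap : ContDiffOn ℝ 1 (lap n η) (closedHalf n) :=
    (contDiff_infty.1 (contDiff_lap hη) 1).contDiffOn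
  have hX (a) : ContDiffOn ℝ 1 (fun y => coord n a (conformalField n y)) (closedHalf n) :=
    (contDiff_infty.1 ((coord n a).contDiff.comp contDiff_conformalField) 1).contDiffOn
  rw [setIntegral_congr_fun isOpen_upperHalf.measurableSet fun p hp =>
    radialDefect_mul_lap hn hφ hη hp (hharm p hp), setIntegral_divergence]
  · have hflux (z : EuclideanSpace ℝ (Fin (n - 1))) :
        coord n none (conformalField n (z, 0)) * (φ (z, 0) * lap n η (z, 0)) +
          greenField n φ (conformalDeriv n n η) none (z, 0) = 0 := by
      have het : coord n none (et n) = 1 := rfl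
      simp only [greenField, frame, Option.elim_none, conformalField_boundary z, map_smul, het,
        lap_boundary z hη h0, conformalDeriv_boundary z h0, pd_et_conformalDeriv_boundary z hη h0,
        smul_eq_mul]
      linear_combination (-pd (et n) η (z, 0)) * hbdry z
    simp [hflux]
  · exact fun a => ((hX a).mul ((hφ.of_le (by norm_num)).mul hlap)).add
      (contDiffOn_greenField hφ hξ a)
  · exact fun a => ((hc.mono' (support_lap_subset η)).mul_left.mul_left).add
      (hasCompactSupport_greenField (hc.mono' (support_conformalDeriv_subset n η)) φ a)

end WeakEquation

section RadialFunctions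

variable {n : ℕ} {F : ℝ → ℝ}

theorem pd_frame_radial (hF : Differentiable ℝ F) (c : ℝ) (q y : Pt n)
    (a : Option (Fin (n - 1))) :
    pd (frame n a) (fun y => F (c * sqNorm n (y - q))) y =
      2 * c * (deriv F (c * sqNorm n (y - q)) * coord n a (y - q)) := by
  have hN : HasFDerivAt (fun y => c * sqNorm n (y - q)) (c • fderiv ℝ (sqNorm n) (y - q)) y :=
    ((hasFDerivAt_comp_sub q).2
      (contDiff_sqNorm.differentiable (by simp) (y - q)).hasFDerivAt).const_mul c
  have hframe : fderiv ℝ (sqNorm n) (y - q) (frame n a) = 2 * coord n a (y - q) :=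
    pd_frame_sqNorm a (y - q)
  refine (congrArg (· (frame n a)) ((hF _).hasDerivAt.comp_hasFDerivAt y hN).fderiv).trans ?_
  simp only [smul_apply, smul_eq_mul, hframe]
  ring

theorem contDiff_radial (hF : ContDiff ℝ ∞ F) (c : ℝ) (q : Pt n) :
    ContDiff ℝ ∞ fun y => F (c * sqNorm n (y - q)) :=
  hF.comp (contDiff_const.mul (contDiff_sqNorm.comp (contDiff_id.sub contDiff_const)))

theorem lap_radial (hn : n ≠ 0) (hF : ContDiff ℝ ∞ F) (c : ℝ) (q y : Pt n) :
    lap n (fun y => F (c * sqNorm n (y - q))) y =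
      2 * c * (n * deriv F (c * sqNorm n (y - q)) +
        2 * (c * sqNorm n (y - q)) * deriv (deriv F) (c * sqNorm n (y - q))) := by
  have hF' : ContDiff ℝ ∞ (deriv F) := (contDiff_infty_iff_deriv.1 hF).2
  have hcoord (a : Option (Fin (n - 1))) :
      HasFDerivAt (fun y => coord n a (y - q)) (coord n a) y :=
    (hasFDerivAt_comp_sub q).2 (coord n a).hasFDerivAt
  have hterm (a : Option (Fin (n - 1))) :
      pd (frame n a) (pd (frame n a) fun y => F (c * sqNorm n (y - q))) y =
        2 * c * (deriv F (c * sqNorm n (y - q)) + 2 * c *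
          deriv (deriv F) (c * sqNorm n (y - q)) * coord n a (y - q) ^ 2) := by
    have hdF := (contDiff_radial hF' c q).differentiable (by simp) y
    have hpd : pd (frame n a) (fun y => coord n a (y - q)) y = 1 := by
      rw [pd, (hcoord a).fderiv, coord_frame, if_pos rfl]
    rw [funext fun y => pd_frame_radial (hF.differentiable (by simp)) c q y a,
      pd_const_mul (hdF.fun_mul (hcoord a).differentiableAt),
      pd_mul hdF (hcoord a).differentiableAt, hpd,
      pd_frame_radial (hF'.differentiable (by simp))]
    ring
  simp only [lap_eq_sum_frame, hterm, ← Finset.mul_sum, Finset.sum_add_distrib, ← sqNorm_eq_sum]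
  rw [Finset.sum_const, Finset.card_univ, nsmul_eq_mul, card_frame hn]
  ring

theorem lap_sub {f g : Pt n → ℝ} (hf : ContDiff ℝ ∞ f) (hg : ContDiff ℝ ∞ g) (p : Pt n) :
    lap n (fun y => f y - g y) p = lap n f p - lap n g p := by
  have h := lap_add (hf.sub hg) hg p
  simp only [sub_add_cancel] at h
  exact eq_sub_of_add_eq h.symm

theorem sq_norm_le_sqNorm (p : Pt n) : ‖p‖ ^ 2 ≤ sqNorm n p := by
  rcases max_cases ‖p.1‖ ‖p.2‖ with h | h <;> rw [Prod.norm_def, h.1, sqNorm]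
  · exact le_add_of_nonneg_right (sq_nonneg _)
  · rw [Real.norm_eq_abs, sq_abs]
    exact le_add_of_nonneg_left (sq_nonneg _)

theorem one_le_sq_mul_sqNorm {l : ℝ} (hl : 0 < l) {p : Pt n} (h : 1 / l ≤ ‖p‖) :
    1 ≤ l ^ 2 * sqNorm n p := by
  have h1 : 1 ≤ l * ‖p‖ := by rwa [div_le_iff₀' hl] at h
  calc 1 ≤ (l * ‖p‖) ^ 2 := one_le_pow₀ h1
    _ = l ^ 2 * ‖p‖ ^ 2 := mul_pow ..
    _ ≤ l ^ 2 * sqNorm n p := by gcongr; exact sq_norm_le_sqNorm p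

/-- Reflection across the boundary of the half-space. -/
def reflect (q : Pt n) : Pt n := (q.1, -q.2)

theorem norm_reflect (q : Pt n) : ‖reflect q‖ = ‖q‖ := by simp [Prod.norm_def, reflect]

theorem sqNorm_sub_reflect (y q : Pt n) :
    sqNorm n (y - reflect q) = sqNorm n (y - q) + 4 * (y.2 * q.2) := by
  simp [sqNorm, reflect]
  ring

/-- The radial function `y ↦ F(l²|y - q|²)` about `q`, made odd across the boundary by subtracting
its mirror image. -/
def oddRadial (F : ℝ → ℝ) (q : Pt n) (l : ℝ) (y : Pt n) : ℝ :=
  F (l ^ 2 * sqNorm n (y - q)) - F (l ^ 2 * sqNorm n (y - reflect q))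

theorem oddRadial_boundary (F : ℝ → ℝ) (q : Pt n) (l : ℝ) (z : EuclideanSpace ℝ (Fin (n - 1))) :
    oddRadial F q l (z, 0) = 0 := by
  simp [oddRadial, sqNorm_sub_reflect]

theorem contDiff_oddRadial (hF : ContDiff ℝ ∞ F) (q : Pt n) (l : ℝ) :
    ContDiff ℝ ∞ (oddRadial F q l) :=
  (contDiff_radial hF _ q).sub (contDiff_radial hF _ (reflect q))

theorem continuous_oddRadial (hF : Continuous F) (q : Pt n) :
    Continuous fun x : ℝ × Pt n => oddRadial F q x.1 x.2 := by
  have hN : Continuous (sqNorm n) := contDiff_sqNorm.continuous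
  unfold oddRadial
  fun_prop

theorem oddRadial_eq_zero {c : ℝ} (hF : ∀ s, 1 ≤ s → F s = c) {q y : Pt n} {l : ℝ} (hl : 0 < l)
    (hy : ‖q‖ + 1 / l ≤ ‖y‖) : oddRadial F q l y = 0 := by
  have hfar {q' : Pt n} (hq' : ‖q'‖ = ‖q‖) : F (l ^ 2 * sqNorm n (y - q')) = c :=
    hF _ (one_le_sq_mul_sqNorm hl (by linarith [norm_sub_norm_le y q']))
  rw [oddRadial, hfar rfl, hfar (norm_reflect q), sub_self]

theorem support_oddRadial_subset {c : ℝ} (hF : ∀ s, 1 ≤ s → F s = c) (q : Pt n) {l : ℝ}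
    (hl : 0 < l) : Function.support (oddRadial F q l) ⊆ closedBall 0 (‖q‖ + 1 / l) := by
  intro y hy
  rw [mem_closedBall_zero_iff]
  by_contra! h
  exact hy (oddRadial_eq_zero hF hl h.le)

theorem abs_oddRadial_le {L : NNReal} (hF : LipschitzWith L F) (q : Pt n) (l : ℝ) (y : Pt n) :
    |oddRadial F q l y| ≤ L * (4 * l ^ 2 * (‖y‖ * ‖q‖)) := by
  refine (hF.dist_le_mul _ _).trans ?_
  rw [Real.dist_eq, abs_sub_comm, ← mul_sub, sqNorm_sub_reflect, add_sub_cancel_left, abs_mul,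
    abs_mul, abs_mul, abs_of_nonneg (sq_nonneg l), abs_of_pos four_pos]
  have := norm_snd_le y
  have := norm_snd_le q
  calc L * (l ^ 2 * (4 * (|y.2| * |q.2|)))
      ≤ L * (l ^ 2 * (4 * (‖y‖ * ‖q‖))) := by gcongr <;> assumption
    _ = L * (4 * l ^ 2 * (‖y‖ * ‖q‖)) := by ring

theorem lap_oddRadial (hn : n ≠ 0) (hF : ContDiff ℝ ∞ F) (q : Pt n) (l : ℝ) (y : Pt n) :
    lap n (oddRadial F q l) y =
      2 * l ^ 2 * oddRadial (fun s => n * deriv F s + 2 * s * deriv (deriv F) s) q l y := by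
  refine (lap_sub (contDiff_radial hF _ q) (contDiff_radial hF _ (reflect q)) y).trans ?_
  rw [lap_radial hn hF, lap_radial hn hF, ← mul_sub, oddRadial]

theorem hasDerivAt_pow_mul_oddRadial (hF : Differentiable ℝ F) {m : ℕ} (hm : m ≠ 0) (q : Pt n)
    (l : ℝ) (y : Pt n) :
    HasDerivAt (fun l => l ^ m * oddRadial F q l y)
      (l ^ (m - 1) * oddRadial (fun s => m * F s + 2 * s * deriv F s) q l y) l := by
  have hscale (N : ℝ) :
      HasDerivAt (fun l => F (l ^ 2 * N)) (deriv F (l ^ 2 * N) * (2 * l * N)) l := by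
    have hsq : HasDerivAt (fun l : ℝ => l ^ 2 * N) (2 * l * N) l := by
      simpa using (hasDerivAt_pow 2 l).mul_const N
    exact (hF _).hasDerivAt.comp l hsq
  refine ((hasDerivAt_pow m l).mul ((hscale _).sub (hscale _))).congr_deriv ?_
  obtain ⟨m, rfl⟩ := Nat.exists_eq_succ_of_ne_zero hm
  simp only [oddRadial, Nat.succ_eq_add_one, Nat.add_sub_cancel, pow_succ l m, Pi.sub_apply]
  ring

end RadialFunctions

section Bump

/-- A smooth bump on the line, supported in `[0, 1]`, with the primitive
`Real.smoothTransition`. -/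
def bump (s : ℝ) : ℝ := deriv Real.smoothTransition s

theorem contDiff_bump : ContDiff ℝ ∞ bump :=
  (contDiff_infty_iff_deriv.1 Real.smoothTransition.contDiff).2

theorem bump_nonneg (s : ℝ) : 0 ≤ bump s := Real.smoothTransition.monotone.deriv_nonneg

theorem bump_eq_zero_of_one_le {s : ℝ} (hs : 1 ≤ s) : bump s = 0 := by
  refine IsLocalMax.deriv_eq_zero (.of_forall fun x => ?_)
  rw [Real.smoothTransition.one_of_one_le hs]
  exact Real.smoothTransition.le_one x

theorem bump_eq_zero_of_nonpos {s : ℝ} (hs : s ≤ 0) : bump s = 0 := by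
  refine IsLocalMin.deriv_eq_zero (.of_forall fun x => ?_)
  rw [Real.smoothTransition.zero_of_nonpos hs]
  exact Real.smoothTransition.nonneg x

theorem deriv_bump_eq_zero_of_one_le {s : ℝ} (hs : 1 ≤ s) : deriv bump s = 0 := by
  refine IsLocalMin.deriv_eq_zero (.of_forall fun x => ?_)
  rw [bump_eq_zero_of_one_le hs]
  exact bump_nonneg x

theorem exists_bump_pos : ∃ s, 0 < s ∧ 0 < bump s := by
  obtain ⟨s, hs, hslope⟩ := exists_deriv_eq_slope Real.smoothTransition zero_lt_one
    Real.smoothTransition.continuous.continuousOn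
    (Real.smoothTransition.contDiff.differentiable one_ne_zero).differentiableOn
  exact ⟨s, hs.1, by simp [bump, hslope]⟩

theorem exists_lipschitzWith_bump : ∃ L, LipschitzWith L bump := by
  refine contDiff_bump.lipschitzWith_of_hasCompactSupport
    (.intro (isCompact_Icc (a := 0) (b := 1)) fun s hs => ?_) (by simp)
  rcases le_total s 0 with h | h
  · exact bump_eq_zero_of_nonpos h
  · exact bump_eq_zero_of_one_le (not_le.1 fun h' => hs ⟨h, h'⟩).le

end Bump

section Liouville

theorem exists_ball_setIntegral_mul_ne_zero {X : Type*} [PseudoMetricSpace X] [ProperSpace X]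
    [MeasurableSpace X] [OpensMeasurableSpace X] {μ : Measure X} [IsFiniteMeasureOnCompacts μ]
    [μ.IsOpenPosMeasure] {U : Set X} (hU : IsOpen U) {w : X → ℝ} (hw : ContinuousOn w U) {q : X}
    (hq : q ∈ U) (hwq : w q ≠ 0) :
    ∃ r > 0, ∀ k : X → ℝ, Continuous k → 0 ≤ k → k ≠ 0 → Function.support k ⊆ ball q r →
      ∫ x in U, w x * k x ∂μ ≠ 0 := by
  have hsign : ∀ᶠ x in 𝓝 q, x ∈ U ∧ 0 < w q * w x :=
    .and (hU.mem_nhds hq) ((continuousAt_const.mul (hw.continuousAt (hU.mem_nhds hq))).eventually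
      (lt_mem_nhds (mul_self_pos.2 hwq)))
  obtain ⟨r, hr, hball⟩ := nhds_basis_closedBall.eventually_iff.1 hsign
  refine ⟨r, hr, fun k hk hk0 hkne hsupp hzero => ?_⟩
  have htsupp : tsupport k ⊆ closedBall q r :=
    closure_minimal (hsupp.trans ball_subset_closedBall) isClosed_closedBall
  have hcs : HasCompactSupport k :=
    (isCompact_closedBall q r).of_isClosed_subset (isClosed_tsupport k) htsupp
  have hcont : Continuous fun x => w q * w x * k x :=
    ((continuousOn_const.mul hw).mul hk.continuousOn).continuous_of_tsupport_subset hU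
      ((tsupport_mul_subset_right).trans fun x hx => (hball (htsupp hx)).1)
  have hsupp' (x : X) (hx : k x ≠ 0) : x ∈ U ∧ 0 < w q * w x :=
    hball (ball_subset_closedBall (hsupp hx))
  have hpos : 0 < ∫ x, w q * w x * k x ∂μ := by
    obtain ⟨x, hx⟩ := Function.ne_iff.1 hkne
    refine hcont.integral_pos_of_hasCompactSupport_nonneg_nonzero hcs.mul_left (fun y => ?_)
      (mul_ne_zero (hsupp' x hx).2.ne' hx)
    rcases eq_or_ne (k y) 0 with hy | hy
    · simp [hy]
    · exact mul_nonneg (hsupp' y hy).2.le (hk0 y)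
  rw [← setIntegral_eq_integral_of_forall_compl_eq_zero (s := U) fun x hx => ?_] at hpos
  · simp [mul_assoc, integral_const_mul, hzero] at hpos
  · rw [not_imp_comm.1 (hsupp' x) fun h => hx h.1, mul_zero]

variable {n : ℕ} {w : Pt n → ℝ}

theorem hasDerivAt_setIntegral_upperHalf_mul (hw : ContinuousOn w (closedHalf n))
    {k k' : ℝ → Pt n → ℝ} {K : Set (Pt n)} (hK : IsCompact K) {a b l : ℝ} (hl : l ∈ Set.Ioo a b)
    (hk : ∀ x, Continuous (k x)) (hk' : Continuous fun x : ℝ × Pt n => k' x.1 x.2)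
    (hsupp : Function.support (k l) ⊆ K)
    (hsupp' : ∀ x ∈ Set.Ioo a b, Function.support (k' x) ⊆ K)
    (hderiv : ∀ x y, HasDerivAt (fun x => k x y) (k' x y) x) :
    HasDerivAt (fun x => ∫ y in upperHalf n, w y * k x y)
      (∫ y in upperHalf n, w y * k' l y) l := by
  have hmeas {g : Pt n → ℝ} (hg : Continuous g) :
      AEStronglyMeasurable (fun y => w y * g y) (volume.restrict (upperHalf n)) :=
    ((hw.mono upperHalf_subset_closedHalf).mul hg.continuousOn).aestronglyMeasurable
      isOpen_upperHalf.measurableSet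
  have hint : IntegrableOn (fun y => w y * k l y) (upperHalf n) :=
    integrableOn_upperHalf_of_continuousOn (hw.mul (hk l).continuousOn) hK
      ((Function.support_mul_subset_right _ _).trans hsupp)
  have hcont : ContinuousOn (fun x : ℝ × Pt n => w x.2 * k' x.1 x.2)
      (Set.Icc a b ×ˢ (K ∩ closedHalf n)) :=
    (hw.comp continuousOn_snd fun _ hx => hx.2.2).mul hk'.continuousOn
  obtain ⟨C, hC⟩ :=
    (isCompact_Icc.prod (hK.inter_right isClosed_closedHalf)).exists_bound_of_continuousOn hcont
  refine (hasDerivAt_integral_of_dominated_loc_of_deriv_le (F' := fun x y => w y * k' x y)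
    (bound := K.indicator fun _ => C) (isOpen_Ioo.mem_nhds hl) (.of_forall fun x => hmeas (hk x))
    hint (hmeas (hk'.comp (by fun_prop : Continuous fun y => (l, y)))) ?_ ?_
    (.of_forall fun y x _ => (hderiv x y).const_mul (w y))).2
  · refine (ae_restrict_iff' isOpen_upperHalf.measurableSet).2 (.of_forall fun y hy x hx => ?_)
    by_cases hyK : y ∈ K
    · rw [Set.indicator_of_mem hyK]
      exact hC (x, y) ⟨⟨hx.1.le, hx.2.le⟩, hyK, upperHalf_subset_closedHalf hy⟩
    · rw [Set.indicator_of_notMem hyK, Function.notMem_support.1 fun h => hyK (hsupp' x hx h)]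
      simp
  · exact ((integrable_indicator_iff hK.measurableSet).2
      (integrableOn_const hK.measure_lt_top.ne)).mono_measure Measure.restrict_le_self

theorem hasDerivAt_setIntegral_mul_oddRadial (hn : n ≠ 0) (hw : ContinuousOn w (closedHalf n))
    (q : Pt n) {l : ℝ} (hl : 0 < l) :
    HasDerivAt (fun l => ∫ y in upperHalf n, w y * (l ^ n * oddRadial bump q l y))
      (∫ y in upperHalf n, w y *
        (l ^ (n - 1) * oddRadial (fun s => n * bump s + 2 * s * deriv bump s) q l y)) l := by
  have hcont : Continuous bump := contDiff_bump.continuous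
  have hcont' : Continuous (deriv bump) := (contDiff_infty_iff_deriv.1 contDiff_bump).2.continuous
  have hsupp {F : ℝ → ℝ} (hF : ∀ s, 1 ≤ s → F s = 0) (m : ℕ) {x : ℝ} (hx : l / 2 < x) :
      Function.support (fun y => x ^ m * oddRadial F q x y) ⊆
        closedBall 0 (‖q‖ + 1 / (l / 2)) := by
    refine ((Function.support_mul_subset_right _ _).trans
      (support_oddRadial_subset hF q ((half_pos hl).trans hx))).trans
      (closedBall_subset_closedBall ?_)
    gcongr
  refine hasDerivAt_setIntegral_upperHalf_mul hw (k := fun l y => l ^ n * oddRadial bump q l y)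
    (k' := fun l y => l ^ (n - 1) *
      oddRadial (fun s => n * bump s + 2 * s * deriv bump s) q l y) (isCompact_closedBall _ _)
    ⟨half_lt_self hl, lt_add_one l⟩
    (fun x => continuous_const.mul (contDiff_oddRadial contDiff_bump q x).continuous)
    ((continuous_fst.pow _).mul (continuous_oddRadial (by fun_prop) q))
    (hsupp (fun _ => bump_eq_zero_of_one_le) n (half_lt_self hl))
    (fun x hx => hsupp (fun s hs => ?_) (n - 1) hx.1)
    fun x y => hasDerivAt_pow_mul_oddRadial (contDiff_bump.differentiable (by simp)) hn q x y
  rw [bump_eq_zero_of_one_le hs, deriv_bump_eq_zero_of_one_le hs]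
  simp

theorem IsWeaklyDirichletHarmonic.setIntegral_mul_oddRadial_eq_zero (hn : n ≠ 0)
    (hharm : IsWeaklyDirichletHarmonic n w) (q : Pt n) {l : ℝ} (hl : 0 < l) :
    ∫ y in upperHalf n, w y *
      (l ^ (n - 1) * oddRadial (fun s => n * bump s + 2 * s * deriv bump s) q l y) = 0 := by
  have hη : ContDiff ℝ ∞ (oddRadial Real.smoothTransition q l) :=
    contDiff_oddRadial Real.smoothTransition.contDiff q l
  have hsupp : HasCompactSupport (oddRadial Real.smoothTransition q l) :=
    .of_support_subset_isCompact (isCompact_closedBall _ _)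
      (support_oddRadial_subset (fun _ => Real.smoothTransition.one_of_one_le) q hl)
  have h := hharm _ hη hsupp (oddRadial_boundary _ q l)
  simp only [lap_oddRadial hn Real.smoothTransition.contDiff] at h
  have hscale (y : Pt n) (a : ℝ) :
      w y * (l ^ (n - 1) * a) = l ^ (n - 1) / (2 * l ^ 2) * (w y * (2 * l ^ 2 * a)) := by
    field_simp
  simp only [hscale, integral_const_mul]
  exact mul_eq_zero_of_right _ h

theorem norm_setIntegral_mul_oddRadial_le (hw : ContinuousOn w (closedHalf n)) {L : NNReal}
    (hL : LipschitzWith L bump) (q : Pt n) {l ρ : ℝ} (hl : 0 < l) (hρ : ‖q‖ + 1 / l ≤ ρ) :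
    ‖∫ y in upperHalf n, w y * (l ^ n * oddRadial bump q l y)‖ ≤
      l ^ n * (L * (4 * l ^ 2 * (ρ * ‖q‖))) * ∫ y in upperHalf n ∩ closedBall 0 ρ, |w y| := by
  have hint : IntegrableOn (fun y => |w y|) (upperHalf n ∩ closedBall 0 ρ) :=
    ((hw.abs.mono Set.inter_subset_left).integrableOn_compact
      ((isCompact_closedBall 0 ρ).inter_left isClosed_closedHalf)).mono_set
      (Set.inter_subset_inter_left _ upperHalf_subset_closedHalf)
  have hmeas : MeasurableSet (upperHalf n ∩ closedBall 0 ρ) :=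
    isOpen_upperHalf.measurableSet.inter isClosed_closedBall.measurableSet
  have hlocal : ∫ y in upperHalf n ∩ closedBall 0 ρ, w y * (l ^ n * oddRadial bump q l y) =
      ∫ y in upperHalf n, w y * (l ^ n * oddRadial bump q l y) := by
    refine (setIntegral_eq_of_subset_of_forall_sdiff_eq_zero isOpen_upperHalf.measurableSet
      Set.inter_subset_left fun y hy => ?_).symm
    have hy' : ρ < ‖y‖ := not_le.1 fun h => hy.2 ⟨hy.1, mem_closedBall_zero_iff.2 h⟩
    rw [oddRadial_eq_zero (fun s => bump_eq_zero_of_one_le) hl (hρ.trans hy'.le), mul_zero,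
      mul_zero]
  rw [← hlocal, ← integral_const_mul]
  refine norm_integral_le_of_norm_le (hint.const_mul _)
    ((ae_restrict_iff' hmeas).2 (.of_forall fun y hy => ?_))
  have hy' : ‖y‖ ≤ ρ := mem_closedBall_zero_iff.1 hy.2
  rw [norm_mul, norm_mul, norm_pow, Real.norm_of_nonneg hl.le, mul_comm, Real.norm_eq_abs (w y)]
  gcongr
  exact (abs_oddRadial_le hL q l y).trans (by gcongr)

theorem tendsto_setIntegral_mul_oddRadial (hw : ContinuousOn w (closedHalf n))
    (hgrowth : (fun ρ => ∫ y in upperHalf n ∩ closedBall 0 ρ, |w y|) =o[atTop]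
      fun ρ => ρ ^ (n + 1)) (q : Pt n) :
    Tendsto (fun l => ∫ y in upperHalf n, w y * (l ^ n * oddRadial bump q l y))
      (𝓝[>] 0) (𝓝 0) := by
  obtain ⟨L, hL⟩ := exists_lipschitzWith_bump
  set A := ‖q‖ + 1
  have hA : 0 < A := by positivity
  have hbound : ∀ᶠ l : ℝ in 𝓝[>] 0,
      ‖∫ y in upperHalf n, w y * (l ^ n * oddRadial bump q l y)‖ ≤
        4 * L * ‖q‖ * A ^ (n + 2) *
          ((∫ y in upperHalf n ∩ closedBall 0 (A / l), |w y|) / (A / l) ^ (n + 1)) := by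
    filter_upwards [Ioc_mem_nhdsGT one_pos] with l ⟨hl, hl1⟩
    have hfar : ‖q‖ + 1 / l ≤ A / l := by
      rw [add_div]
      gcongr
      exact le_div_self (norm_nonneg q) hl hl1
    refine (norm_setIntegral_mul_oddRadial_le hw hL q hl hfar).trans_eq ?_
    rw [div_pow, pow_succ A (n + 1)]
    field_simp
    ring
  have hscale : Tendsto (fun l : ℝ => A / l) (𝓝[>] 0) atTop :=
    tendsto_inv_nhdsGT_zero.const_mul_atTop hA
  refine squeeze_zero_norm' hbound ?_
  simpa using ((hgrowth.tendsto_div_nhds_zero).comp hscale).const_mul (4 * L * ‖q‖ * A ^ (n + 2))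

theorem IsWeaklyDirichletHarmonic.setIntegral_mul_pow_mul_oddRadial_eq_zero (hn : n ≠ 0)
    (hharm : IsWeaklyDirichletHarmonic n w) (hw : ContinuousOn w (closedHalf n))
    (hgrowth : (fun ρ => ∫ y in upperHalf n ∩ closedBall 0 ρ, |w y|) =o[atTop]
      fun ρ => ρ ^ (n + 1)) (q : Pt n) {l : ℝ} (hl : 0 < l) :
    ∫ y in upperHalf n, w y * (l ^ n * oddRadial bump q l y) = 0 := by
  have hderiv (x : ℝ) (hx : x ∈ Set.Ioi (0 : ℝ)) :
      HasDerivAt (fun l => ∫ y in upperHalf n, w y * (l ^ n * oddRadial bump q l y)) 0 x := by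
    have h := hasDerivAt_setIntegral_mul_oddRadial hn hw q hx
    rwa [hharm.setIntegral_mul_oddRadial_eq_zero hn q hx] at h
  refine tendsto_nhds_unique (tendsto_const_nhds.congr' ?_)
    (tendsto_setIntegral_mul_oddRadial hw hgrowth q)
  filter_upwards [self_mem_nhdsWithin] with x hx
  exact isOpen_Ioi.is_const_of_deriv_eq_zero isPreconnected_Ioi
    (fun y hy => (hderiv y hy).differentiableAt.differentiableWithinAt)
    (fun y hy => (hderiv y hy).deriv) hl hx

theorem IsWeaklyDirichletHarmonic.eq_zero (hn : n ≠ 0)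
    (hharm : IsWeaklyDirichletHarmonic n w) (hw : ContinuousOn w (closedHalf n))
    (hgrowth : (fun ρ => ∫ y in upperHalf n ∩ closedBall 0 ρ, |w y|) =o[atTop]
      fun ρ => ρ ^ (n + 1)) {q : Pt n} (hq : q ∈ upperHalf n) : w q = 0 := by
  by_contra hwq
  have hq' : 0 < q.2 := hq
  obtain ⟨r, hr, hball⟩ := exists_ball_setIntegral_mul_ne_zero (μ := volume) isOpen_upperHalf
    (hw.mono upperHalf_subset_closedHalf) hq hwq
  obtain ⟨s, hs, hbump⟩ := exists_bump_pos
  set l := 1 / min r q.2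
  have hl : 0 < l := by positivity
  have hl' : 1 / l = min r q.2 := one_div_one_div _
  have hmirror (y : Pt n) (hy : y ∈ upperHalf n) :
      bump (l ^ 2 * sqNorm n (y - reflect q)) = 0 := by
    have hy' : 0 < y.2 := hy
    refine bump_eq_zero_of_one_le (one_le_sq_mul_sqNorm hl ?_)
    calc 1 / l ≤ q.2 := hl'.trans_le (min_le_right _ _)
      _ ≤ ‖(y - reflect q).2‖ := by
        rw [Prod.snd_sub, reflect, sub_neg_eq_add]
        exact (by linarith : q.2 ≤ y.2 + q.2).trans (le_abs_self _)
      _ ≤ ‖y - reflect q‖ := norm_snd_le _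
  refine hball (fun y => l ^ n * bump (l ^ 2 * sqNorm n (y - q)))
    (continuous_const.mul (contDiff_radial contDiff_bump _ q).continuous)
    (fun y => mul_nonneg (by positivity) (bump_nonneg _)) (Function.ne_iff.2 ?_) ?_ ?_
  · refine ⟨q + (√s / l) • et n, ?_⟩
    have : l ^ 2 * sqNorm n (q + (√s / l) • et n - q) = s := by
      simp [sqNorm, et, div_pow, Real.sq_sqrt hs.le]
      field_simp
    rw [this]
    exact (by positivity)
  · intro y hy
    rw [mem_ball_iff_norm]
    by_contra! h
    refine right_ne_zero_of_mul hy (bump_eq_zero_of_one_le (one_le_sq_mul_sqNorm hl ?_))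
    exact hl'.trans_le ((min_le_left _ _).trans h)
  · rw [← hharm.setIntegral_mul_pow_mul_oddRadial_eq_zero hn hw hgrowth q hl]
    refine setIntegral_congr_fun isOpen_upperHalf.measurableSet fun y hy => ?_
    simp [oddRadial, hmirror y hy]

end Liouville

section Growth

variable {n : ℕ} {φ : Pt n → ℝ}

theorem continuousOn_radialDefect (hφ : ContDiffOn ℝ 2 φ (closedHalf n)) :
    ContinuousOn (radialDefect n φ) (closedHalf n) := by
  have hdφ : ContinuousOn (fun p => fderivWithin ℝ φ (closedHalf n) p (conformalField n p))
      (closedHalf n) :=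
    (hφ.continuousOn_fderivWithin uniqueDiffOn_closedHalf one_le_two).clm_apply
      contDiff_conformalField.continuous.continuousOn
  have hφc : ContinuousOn φ (closedHalf n) := hφ.continuousOn
  unfold radialDefect
  fun_prop

theorem sqNorm_conformalField (p : Pt n) :
    sqNorm n (conformalField n p) = (sqNorm n p + 1) ^ 2 - 4 * p.2 ^ 2 := by
  simp only [sqNorm, conformalField, norm_smul, mul_pow, Real.norm_eq_abs, sq_abs]
  ring

theorem sq_radialDefect_le (φ : Pt n → ℝ) {p : Pt n} (hp : p ∈ upperHalf n) :
    radialDefect n φ p ^ 2 ≤ 8 * (n + 1) ^ 2 * (sqNorm n p + 1) ^ 2 *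
      (φ p ^ 2 + ∑ a, pd (frame n a) φ p ^ 2) := by
  have hp' : 0 < p.2 := hp
  set G := ∑ a, pd (frame n a) φ p ^ 2
  have hderiv : (fderiv ℝ φ p (conformalField n p)) ^ 2 ≤ (sqNorm n p + 1) ^ 2 * G := by
    rw [← sum_coord_mul_map_frame]
    refine (Finset.sum_mul_sq_le_sq_mul_sq _ _ _).trans ?_
    rw [← sqNorm_eq_sum, sqNorm_conformalField]
    exact mul_le_mul_of_nonneg_right (by linarith [sq_nonneg p.2]) (by positivity)
  have hcoeff : ((n - 2) * p.2 - n) ^ 2 ≤ 4 * (n + 1) ^ 2 * (sqNorm n p + 1) ^ 2 := by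
    have hN : 0 ≤ sqNorm n p := by unfold sqNorm; positivity
    have ht : 2 * p.2 ≤ sqNorm n p + 1 := by
      unfold sqNorm
      nlinarith [sq_nonneg (p.2 - 1), sq_nonneg ‖p.1‖]
    calc ((n - 2) * p.2 - n) ^ 2 ≤ (2 * (n + 1) * (sqNorm n p + 1)) ^ 2 :=
          sq_le_sq' (by nlinarith) (by nlinarith)
      _ = _ := by ring
  rw [radialDefect, fderivWithin_of_mem_nhds (closedHalf_mem_nhds hp)]
  calc (fderiv ℝ φ p (conformalField n p) + ((n - 2) * p.2 - n) * φ p) ^ 2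
      ≤ 2 * ((fderiv ℝ φ p (conformalField n p)) ^ 2 + (((n - 2) * p.2 - n) * φ p) ^ 2) :=
        add_sq_le
    _ ≤ 2 * (4 * (n + 1) ^ 2 * (sqNorm n p + 1) ^ 2 * G +
          4 * (n + 1) ^ 2 * (sqNorm n p + 1) ^ 2 * φ p ^ 2) := by
        rw [mul_pow]
        have hn : (1 : ℝ) ≤ 4 * (n + 1) ^ 2 := by nlinarith [n.cast_nonneg (α := ℝ)]
        gcongr
        rw [mul_assoc]
        exact hderiv.trans (le_mul_of_one_le_left (by positivity) hn)
    _ = _ := by ring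

theorem sq_integral_le {α : Type*} [MeasurableSpace α] {μ : Measure α} [IsFiniteMeasure μ]
    {f : α → ℝ} (hf : MemLp f 2 μ) : (∫ x, f x ∂μ) ^ 2 ≤ μ.real Set.univ * ∫ x, f x ^ 2 ∂μ := by
  rcases eq_zero_or_neZero μ with rfl | _
  · simp
  have hjensen := (even_two.convexOn_pow (𝕜 := ℝ)).map_average_le (μ := μ) (by fun_prop)
    isClosed_univ (by simp) (hf.integrable one_le_two) hf.integrable_sq
  have hV : 0 < μ.real Set.univ := measureReal_univ_pos
  simp only [average_eq, smul_eq_mul] at hjensen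
  rw [mul_pow, inv_pow, ← div_eq_inv_mul, ← div_eq_inv_mul, div_le_div_iff₀ (by positivity) hV,
    sq (μ.real _), ← mul_assoc, mul_le_mul_iff_left₀ hV] at hjensen
  linarith

theorem volume_real_closedBall_zero (hn : n ≠ 0) {ρ : ℝ} (hρ : 0 ≤ ρ) :
    volume.real (closedBall (0 : Pt n) ρ) = ρ ^ n * volume.real (closedBall (0 : Pt n) 1) := by
  have : (volume : Measure (Pt n)).IsAddHaarMeasure := Measure.prod.instIsAddHaarMeasure _ _
  have hfinrank : Module.finrank ℝ (Pt n) = n := by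
    simp
    omega
  rw [Measure.addHaar_real_closedBall' _ _ hρ, hfinrank]

theorem setIntegral_sq_radialDefect_le
    (henergy : IntegrableOn (fun p => φ p ^ 2 + ∑ a, pd (frame n a) φ p ^ 2) (upperHalf n))
    {ρ : ℝ} (hρ : 1 ≤ ρ) :
    ∫ p in upperHalf n ∩ closedBall 0 ρ, radialDefect n φ p ^ 2 ≤
      72 * (n + 1) ^ 2 * ρ ^ 4 *
        ∫ p in upperHalf n, (φ p ^ 2 + ∑ a, pd (frame n a) φ p ^ 2) := by
  have hmeas : MeasurableSet (upperHalf n ∩ closedBall 0 ρ) :=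
    isOpen_upperHalf.measurableSet.inter isClosed_closedBall.measurableSet
  have hpoint (p : Pt n) (hp : p ∈ upperHalf n ∩ closedBall 0 ρ) :
      radialDefect n φ p ^ 2 ≤
        72 * (n + 1) ^ 2 * ρ ^ 4 * (φ p ^ 2 + ∑ a, pd (frame n a) φ p ^ 2) := by
    have hpρ : ‖p‖ ≤ ρ := mem_closedBall_zero_iff.1 hp.2
    have hN : 0 ≤ sqNorm n p := by unfold sqNorm; positivity
    have hNρ : sqNorm n p + 1 ≤ 3 * ρ ^ 2 := by
      have h1 : ‖p.1‖ ^ 2 ≤ ρ ^ 2 := by gcongr; exact (norm_fst_le p).trans hpρ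
      have h2 : p.2 ^ 2 ≤ ρ ^ 2 := sq_le_sq.2 (((norm_snd_le p).trans hpρ).trans (le_abs_self ρ))
      have h3 : 1 ≤ ρ ^ 2 := one_le_pow₀ hρ
      unfold sqNorm
      linarith
    calc radialDefect n φ p ^ 2 ≤ _ := sq_radialDefect_le φ hp.1
      _ ≤ 8 * (n + 1) ^ 2 * (3 * ρ ^ 2) ^ 2 * (φ p ^ 2 + ∑ a, pd (frame n a) φ p ^ 2) := by gcongr
      _ = _ := by ring
  rw [← integral_const_mul]
  calc ∫ p in upperHalf n ∩ closedBall 0 ρ, radialDefect n φ p ^ 2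
      ≤ ∫ p in upperHalf n ∩ closedBall 0 ρ,
          72 * (n + 1) ^ 2 * ρ ^ 4 * (φ p ^ 2 + ∑ a, pd (frame n a) φ p ^ 2) :=
        integral_mono_of_nonneg (.of_forall fun p => sq_nonneg _)
          ((henergy.mono_set Set.inter_subset_left).const_mul _)
          ((ae_restrict_iff' hmeas).2 (.of_forall hpoint))
    _ ≤ _ := setIntegral_mono_set (henergy.const_mul _) (.of_forall fun p => by positivity)
        (.of_forall Set.inter_subset_left)

theorem sq_setIntegral_radialDefect_le (hn : n ≠ 0) (hφ : ContDiffOn ℝ 2 φ (closedHalf n))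
    (henergy : IntegrableOn (fun p => φ p ^ 2 + ∑ a, pd (frame n a) φ p ^ 2) (upperHalf n))
    {ρ : ℝ} (hρ : 1 ≤ ρ) :
    (∫ p in upperHalf n ∩ closedBall 0 ρ, |radialDefect n φ p|) ^ 2 ≤
      ρ ^ n * volume.real (closedBall (0 : Pt n) 1) * (72 * (n + 1) ^ 2 * ρ ^ 4 *
        ∫ p in upperHalf n, (φ p ^ 2 + ∑ a, pd (frame n a) φ p ^ 2)) := by
  have hcompact : IsCompact (closedHalf n ∩ closedBall 0 ρ) :=
    (isCompact_closedBall 0 ρ).inter_left isClosed_closedHalf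
  have hcont : ContinuousOn (radialDefect n φ) (closedHalf n ∩ closedBall 0 ρ) :=
    (continuousOn_radialDefect hφ).mono Set.inter_subset_left
  have hsub : upperHalf n ∩ closedBall 0 ρ ⊆ closedHalf n ∩ closedBall 0 ρ :=
    Set.inter_subset_inter_left _ upperHalf_subset_closedHalf
  have : IsFiniteMeasure (volume.restrict (upperHalf n ∩ closedBall 0 ρ)) :=
    isFiniteMeasure_restrict.2 ((measure_mono hsub).trans_lt hcompact.measure_lt_top).ne
  have hLp : MemLp (fun p => |radialDefect n φ p|) 2
      (volume.restrict (upperHalf n ∩ closedBall 0 ρ)) := by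
    rw [memLp_two_iff_integrable_sq ((hcont.abs.integrableOn_compact hcompact).mono_set hsub).1]
    exact ((hcont.abs.pow 2).integrableOn_compact hcompact).mono_set hsub
  refine (sq_integral_le hLp).trans ?_
  simp only [sq_abs, measureReal_restrict_apply_univ]
  refine mul_le_mul ?_ (setIntegral_sq_radialDefect_le henergy hρ)
    (integral_nonneg fun p => sq_nonneg _) (by positivity)
  rw [← volume_real_closedBall_zero hn (zero_le_one.trans hρ)]
  exact measureReal_mono Set.inter_subset_right measure_closedBall_lt_top.ne

theorem isLittleO_setIntegral_radialDefect (hn : 3 ≤ n) (hφ : ContDiffOn ℝ 2 φ (closedHalf n))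
    (henergy : IntegrableOn (fun p => φ p ^ 2 + ∑ a, pd (frame n a) φ p ^ 2) (upperHalf n)) :
    (fun ρ => ∫ p in upperHalf n ∩ closedBall 0 ρ, |radialDefect n φ p|) =o[atTop]
      fun ρ => ρ ^ (n + 1) := by
  have hO : (fun ρ => (∫ p in upperHalf n ∩ closedBall 0 ρ, |radialDefect n φ p|) ^ 2) =O[atTop]
      fun ρ => ρ ^ (n + 4) := by
    refine .of_bound (volume.real (closedBall (0 : Pt n) 1) * (72 * (n + 1) ^ 2 *
      ∫ p in upperHalf n, (φ p ^ 2 + ∑ a, pd (frame n a) φ p ^ 2))) ?_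
    filter_upwards [eventually_ge_atTop 1] with ρ hρ
    rw [Real.norm_of_nonneg (by positivity), Real.norm_of_nonneg (by positivity)]
    refine (sq_setIntegral_radialDefect_le (by omega) hφ henergy hρ).trans_eq ?_
    ring
  refine .of_pow (n := 2) (hO.trans_isLittleO ?_) two_ne_zero
  exact (isLittleO_pow_pow_atTop_of_lt (by omega)).congr_right fun ρ => pow_mul ρ (n + 1) 2

end Growth

section Euler

variable {E : Type*} [NormedAddCommGroup E] [NormedSpace ℝ E] {s : Set E} {u : E → ℝ} {x : E}

theorem hasDerivAt_comp_smul {r : ℝ} (hu : DifferentiableAt ℝ u (r • x)) :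
    HasDerivAt (fun r : ℝ => u (r • x)) (fderiv ℝ u (r • x) x) r := by
  have hray : HasDerivAt (fun r : ℝ => r • x) x r := by
    simpa using (hasDerivAt_id r).smul_const x
  exact hu.hasFDerivAt.comp_hasDerivAt r hray

theorem smul_eq_mul_of_fderiv_apply_self (hs : StarConvex ℝ 0 s)
    (hu : ∀ x ∈ s, DifferentiableAt ℝ u x) (heuler : ∀ x ∈ s, fderiv ℝ u x x = u x) (hx : x ∈ s)
    {r : ℝ} (hr : r ∈ Set.Ioc (0 : ℝ) 1) : u (r • x) = r * u x := by
  have hmem {r : ℝ} (hr : r ∈ Set.Ioc (0 : ℝ) 1) : r • x ∈ s :=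
    starConvex_zero_iff.1 hs hx hr.1.le hr.2
  have hquot (r : ℝ) (hr : r ∈ Set.Ioc (0 : ℝ) 1) :
      HasDerivAt (fun r : ℝ => u (r • x) / r) 0 r := by
    refine ((hasDerivAt_comp_smul (hu _ (hmem hr))).fun_div (hasDerivAt_id' r)
      hr.1.ne').congr_deriv ?_
    have := heuler _ (hmem hr)
    rw [map_smul, smul_eq_mul] at this
    rw [← this]
    ring
  have hconst : u ((1 : ℝ) • x) / 1 = u (r • x) / r :=
    constant_of_has_deriv_right_zero (f := fun r : ℝ => u (r • x) / r)
      (fun y hy => (hquot y ⟨hr.1.trans_le hy.1, hy.2⟩).continuousAt.continuousWithinAt)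
      (fun y hy => (hquot y ⟨hr.1.trans_le hy.1, hy.2.le⟩).hasDerivWithinAt) 1 ⟨hr.2, le_rfl⟩
  rw [one_smul, div_one, eq_div_iff hr.1.ne'] at hconst
  rw [← hconst, mul_comm]

theorem eq_fderiv_zero_of_fderiv_apply_self (hs : StarConvex ℝ 0 s)
    (hu : ∀ x ∈ s, DifferentiableAt ℝ u x) (heuler : ∀ x ∈ s, fderiv ℝ u x x = u x)
    (hx : x ∈ s) : u x = fderiv ℝ u 0 x := by
  have h0 : (0 : E) ∈ s := by simpa using starConvex_zero_iff.1 hs hx le_rfl zero_le_one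
  have hu0 : u 0 = 0 := by simpa using (heuler 0 h0).symm
  have hderiv : HasDerivAt (fun r : ℝ => u (r • x)) (fderiv ℝ u 0 x) 0 := by
    simpa using hasDerivAt_comp_smul (r := 0) (x := x) (by simpa using hu 0 h0)
  refine tendsto_nhds_unique (tendsto_const_nhds.congr' ?_)
    hderiv.tendsto_slope_zero_right
  filter_upwards [Ioc_mem_nhdsGT zero_lt_one] with r hr
  rw [zero_add, zero_smul, hu0, sub_zero, smul_eq_mul,
    smul_eq_mul_of_fderiv_apply_self hs hu heuler hx hr, inv_mul_cancel_left₀ hr.1.ne']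

end Euler

section Bubble

variable {n : ℕ} {p x : Pt n}

theorem sqNorm_smul (r : ℝ) (p : Pt n) : sqNorm n (r • p) = r ^ 2 * sqNorm n p := by
  simp [sqNorm, norm_smul, mul_pow, mul_add]

theorem sqNorm_add_et (p : Pt n) : sqNorm n (p + et n) = sqNorm n p + 2 * p.2 + 1 := by
  simp [sqNorm, et]
  ring

theorem hasFDerivAt_sqNorm_add_et (p : Pt n) :
    HasFDerivAt (fun q => sqNorm n (q + et n)) (fderiv ℝ (sqNorm n) (p + et n)) p :=
  (hasFDerivAt_comp_add_right (et n)).2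
    (contDiff_sqNorm.differentiable (by simp) (p + et n)).hasFDerivAt

theorem sqNorm_add_et_pos_of_mem_upperHalf (hp : p ∈ upperHalf n) : 0 < sqNorm n (p + et n) := by
  have : 0 < p.2 := hp
  rw [sqNorm_add_et, sqNorm]
  positivity

theorem stdBubble_eq_rpow :
    stdBubble n = fun p => sqNorm n (p + et n) ^ (-(((n : ℝ) - 2) / 2)) := by
  funext p
  simp [stdBubble, sqNorm, et, add_comm]

theorem stdBubble_pos (hp : p ∈ upperHalf n) : 0 < stdBubble n p := by
  rw [stdBubble_eq_rpow]
  exact Real.rpow_pos_of_pos (sqNorm_add_et_pos_of_mem_upperHalf hp) _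

theorem hasFDerivAt_stdBubble (hp : p ∈ upperHalf n) :
    HasFDerivAt (stdBubble n)
      ((-(((n : ℝ) - 2) / 2) * stdBubble n p / sqNorm n (p + et n)) •
        fderiv ℝ (sqNorm n) (p + et n)) p := by
  have hD := sqNorm_add_et_pos_of_mem_upperHalf hp
  have hN := (hasFDerivAt_sqNorm_add_et p).rpow_const (p := -(((n : ℝ) - 2) / 2)) (.inl hD.ne')
  rw [stdBubble_eq_rpow]
  refine hN.congr_fderiv ?_
  rw [Real.rpow_sub_one hD.ne', mul_div_assoc]

theorem pd_stdBubble (hp : p ∈ upperHalf n) (v : Pt n) :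
    pd v (stdBubble n) p = -((n : ℝ) - 2) * stdBubble n p *
      (inner ℝ p.1 v.1 + (p.2 + 1) * v.2) / sqNorm n (p + et n) := by
  rw [pd, (hasFDerivAt_stdBubble hp).fderiv, smul_apply, ← pd, pd_sqNorm]
  simp [et]
  ring

theorem pd_conformalField_stdBubble (hp : p ∈ upperHalf n) :
    pd (conformalField n p) (stdBubble n) p = -((n : ℝ) - 2) * (p.2 - 1) * stdBubble n p := by
  have hD := (sqNorm_add_et_pos_of_mem_upperHalf hp).ne'
  rw [pd_stdBubble hp, div_eq_iff hD, sqNorm_add_et]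
  simp only [conformalField, inner_smul_right, real_inner_self_eq_norm_sq, sqNorm]
  ring

/-- The Cayley transform, i.e. the inversion in the sphere of radius `√2` about `(0, -1)`, which
exchanges the upper half-space and the unit ball. -/
def cayley (n : ℕ) (p : Pt n) : Pt n := (2 / sqNorm n (p + et n)) • (p + et n) - et n

theorem sqNorm_cayley_add_et (p : Pt n) :
    sqNorm n (cayley n p + et n) = 4 / sqNorm n (p + et n) := by
  rw [cayley, sub_add_cancel, sqNorm_smul]
  rcases eq_or_ne (sqNorm n (p + et n)) 0 with h | h
  · simp [h]
  · field_simp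
    norm_num

theorem cayley_cayley (hp : sqNorm n (p + et n) ≠ 0) : cayley n (cayley n p) = p := by
  rw [cayley, sqNorm_cayley_add_et, cayley, sub_add_cancel, smul_smul]
  have : 2 / (4 / sqNorm n (p + et n)) * (2 / sqNorm n (p + et n)) = 1 := by
    field_simp
    norm_num
  rw [this, one_smul, add_sub_cancel_right]

theorem cayley_snd (hp : sqNorm n (p + et n) ≠ 0) :
    (cayley n p).2 = (1 - sqNorm n p) / sqNorm n (p + et n) := by
  have : (cayley n p).2 = 2 / sqNorm n (p + et n) * (p.2 + 1) - 1 := by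
    simp [cayley, et, mul_add]
  rw [this, eq_div_iff hp, sub_mul, div_mul_eq_mul_div, div_mul_cancel₀ _ hp, sqNorm_add_et]
  ring

theorem sqNorm_cayley (hp : sqNorm n (p + et n) ≠ 0) :
    sqNorm n (cayley n p) = 1 - 4 * p.2 / sqNorm n (p + et n) := by
  have h := sqNorm_add_et (cayley n p)
  rw [sqNorm_cayley_add_et, cayley_snd hp] at h
  have hD := sqNorm_add_et p
  field_simp at h ⊢
  linarith

theorem sqNorm_cayley_lt_one (hp : p ∈ upperHalf n) : sqNorm n (cayley n p) < 1 := by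
  have hD := sqNorm_add_et_pos_of_mem_upperHalf hp
  have hp' : 0 < p.2 := hp
  rw [sqNorm_cayley hD.ne']
  exact sub_lt_self _ (by positivity)

theorem sqNorm_add_et_pos_of_sqNorm_lt_one (hx : sqNorm n x < 1) : 0 < sqNorm n (x + et n) := by
  have h1 : x.2 ^ 2 ≤ sqNorm n x := le_add_of_nonneg_left (sq_nonneg _)
  have h2 : 0 < x.2 + 1 := by nlinarith
  have h3 : (x + et n).2 = x.2 + 1 := by simp [et]
  rw [sqNorm, h3]
  positivity

theorem cayley_mem_upperHalf (hx : sqNorm n x < 1) : cayley n x ∈ upperHalf n := by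
  have hD := sqNorm_add_et_pos_of_sqNorm_lt_one hx
  change 0 < (cayley n x).2
  rw [cayley_snd hD.ne']
  exact div_pos (sub_pos.2 hx) hD

theorem differentiableAt_cayley (hx : sqNorm n (x + et n) ≠ 0) :
    DifferentiableAt ℝ (cayley n) x := by
  have hN := (hasFDerivAt_sqNorm_add_et x).differentiableAt
  unfold cayley
  fun_prop (disch := assumption)

theorem fderiv_cayley_apply_self (hx : sqNorm n (x + et n) ≠ 0) :
    fderiv ℝ (cayley n) x x = (1 / 2 : ℝ) • conformalField n (cayley n x) := by
  have h := ((((hasDerivAt_inv hx).comp_hasFDerivAt x (hasFDerivAt_sqNorm_add_et x)).const_mul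
    (2 : ℝ)).fun_smul ((hasFDerivAt_id x).add_const (et n))).sub_const (et n)
  have hpd : fderiv ℝ (sqNorm n) (x + et n) x = 2 * (sqNorm n x + x.2) := by
    rw [← pd, pd_sqNorm]
    simp [et, sqNorm]
    ring
  have hN : sqNorm n x = sqNorm n (x + et n) - 2 * x.2 - 1 := by
    rw [sqNorm_add_et]
    ring
  refine (congrArg (· x) h.fderiv).trans ?_
  rw [conformalField_eq, cayley_snd hx, sqNorm_cayley hx, cayley]
  simp only [Function.comp_apply, neg_smul, smul_neg, id_eq, add_apply, smul_apply,
    ContinuousLinearMap.id_apply, ContinuousLinearMap.smulRight_apply, neg_apply, smul_eq_mul,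
    smul_add, hpd, hN]
  match_scalars
  · field_simp
    ring
  · field_simp
    ring

theorem pd_ez_stdBubble (hp : p ∈ upperHalf n) (i : Fin (n - 1)) :
    pd (ez n i) (stdBubble n) p = -(((n : ℝ) - 2) / 2) * stdBubble n p * (cayley n p).1 i := by
  rw [pd_stdBubble hp]
  simp [ez, et, cayley, EuclideanSpace.inner_single_right]
  ring

theorem jlast_eq (hp : p ∈ upperHalf n) :
    jlast n p = ((n : ℝ) - 2) / 2 * stdBubble n p * (cayley n p).2 := by
  have hD := (sqNorm_add_et_pos_of_mem_upperHalf hp).ne'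
  have hsum := sum_coord_mul_map_frame (fderiv ℝ (stdBubble n) p) p
  rw [Fintype.sum_option, add_comm] at hsum
  have hradial : jlast n p = ((n : ℝ) - 2) / 2 * stdBubble n p + pd p (stdBubble n) p :=
    congrArg _ hsum
  rw [hradial, pd_stdBubble hp, cayley_snd hD, real_inner_self_eq_norm_sq]
  field_simp
  rw [sqNorm_add_et, sqNorm]
  ring

end Bubble

section Transplantation

variable {n : ℕ} {φ : Pt n → ℝ}

theorem hasFDerivAt_div_stdBubble {p : Pt n} (hp : p ∈ upperHalf n)
    (hφ : DifferentiableAt ℝ φ p) :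
    HasFDerivAt (fun q => φ q / stdBubble n q)
      ((stdBubble n p)⁻¹ • fderiv ℝ φ p -
        (φ p / stdBubble n p ^ 2) • fderiv ℝ (stdBubble n) p) p := by
  have hinv := (hasDerivAt_inv (stdBubble_pos hp).ne').comp_hasFDerivAt p
    (hasFDerivAt_stdBubble hp).differentiableAt.hasFDerivAt
  simp only [div_eq_mul_inv]
  refine (hφ.hasFDerivAt.fun_mul hinv).congr_fderiv ?_
  simp only [Function.comp_apply]
  module

theorem pd_conformalField_div_stdBubble {p : Pt n} (hp : p ∈ upperHalf n)
    (hφ : DifferentiableAt ℝ φ p) (hdefect : radialDefect n φ p = 0) :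
    pd (conformalField n p) (fun q => φ q / stdBubble n q) p = 2 * (φ p / stdBubble n p) := by
  have hU := (stdBubble_pos hp).ne'
  have hXU : fderiv ℝ (stdBubble n) p (conformalField n p) = _ := pd_conformalField_stdBubble hp
  rw [radialDefect, ← pd_eq_fderivWithin φ _ hp, pd] at hdefect
  rw [pd, (hasFDerivAt_div_stdBubble hp hφ).fderiv]
  simp only [smul_apply, sub_apply, smul_eq_mul, hXU]
  field_simp
  linear_combination hdefect

/-- The quotient `φ / U`, transplanted to the unit ball by the Cayley transform. -/
def transplant (n : ℕ) (φ : Pt n → ℝ) (x : Pt n) : ℝ :=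
  φ (cayley n x) / stdBubble n (cayley n x)

theorem hasFDerivAt_transplant {x : Pt n} (hx : sqNorm n x < 1)
    (hφ : DifferentiableAt ℝ φ (cayley n x)) :
    HasFDerivAt (transplant n φ)
      ((fderiv ℝ (fun q => φ q / stdBubble n q) (cayley n x)).comp (fderiv ℝ (cayley n) x)) x :=
  (hasFDerivAt_div_stdBubble (cayley_mem_upperHalf hx) hφ).differentiableAt.hasFDerivAt.comp x
    (differentiableAt_cayley (sqNorm_add_et_pos_of_sqNorm_lt_one hx).ne').hasFDerivAt

theorem fderiv_transplant_apply_self {x : Pt n} (hx : sqNorm n x < 1)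
    (hφ : DifferentiableAt ℝ φ (cayley n x)) (hdefect : radialDefect n φ (cayley n x) = 0) :
    fderiv ℝ (transplant n φ) x x = transplant n φ x := by
  rw [(hasFDerivAt_transplant hx hφ).fderiv, ContinuousLinearMap.comp_apply,
    fderiv_cayley_apply_self (sqNorm_add_et_pos_of_sqNorm_lt_one hx).ne', map_smul, ← pd,
    pd_conformalField_div_stdBubble (cayley_mem_upperHalf hx) hφ hdefect, smul_eq_mul, transplant]
  ring

theorem starConvex_sqNorm_lt_one : StarConvex ℝ 0 {x : Pt n | sqNorm n x < 1} := by
  refine starConvex_zero_iff.2 fun x hx r hr0 hr1 => ?_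
  change sqNorm n (r • x) < 1
  have hN : 0 ≤ sqNorm n x := by unfold sqNorm; positivity
  rw [sqNorm_smul]
  exact (mul_le_of_le_one_left hN (pow_le_one₀ hr0 hr1)).trans_lt hx

theorem eq_stdBubble_mul_fderiv_transplant (hφ : DifferentiableOn ℝ φ (upperHalf n))
    (hdefect : ∀ p ∈ upperHalf n, radialDefect n φ p = 0) {p : Pt n} (hp : p ∈ upperHalf n) :
    φ p = stdBubble n p * fderiv ℝ (transplant n φ) 0 (cayley n p) := by
  have hφ' (x : Pt n) (hx : sqNorm n x < 1) : DifferentiableAt ℝ φ (cayley n x) :=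
    hφ.differentiableAt (isOpen_upperHalf.mem_nhds (cayley_mem_upperHalf hx))
  rw [← eq_fderiv_zero_of_fderiv_apply_self starConvex_sqNorm_lt_one
      (fun x hx => (hasFDerivAt_transplant hx (hφ' x hx)).differentiableAt)
      (fun x hx => fderiv_transplant_apply_self hx (hφ' x hx) (hdefect _ (cayley_mem_upperHalf hx)))
      (sqNorm_cayley_lt_one hp),
    transplant, cayley_cayley (sqNorm_add_et_pos_of_mem_upperHalf hp).ne',
    mul_div_cancel₀ _ (stdBubble_pos hp).ne']

theorem stdBubble_mul_clm_cayley_eq_sum (hn : (n : ℝ) ≠ 2) (A : Pt n →L[ℝ] ℝ) {p : Pt n}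
    (hp : p ∈ upperHalf n) :
    stdBubble n p * A (cayley n p) =
      ∑ i, (-2 / ((n : ℝ) - 2) * A (ez n i)) * pd (ez n i) (stdBubble n) p +
        (2 / ((n : ℝ) - 2) * A (et n)) * jlast n p := by
  have hn' : (n : ℝ) - 2 ≠ 0 := sub_ne_zero.2 hn
  rw [← sum_coord_mul_map_frame A, Fintype.sum_option, add_comm, mul_add, Finset.mul_sum]
  congr 1
  · refine Finset.sum_congr rfl fun i _ => ?_
    rw [pd_ez_stdBubble hp, coord_some, frame, Option.elim_some]
    field_simp
  · rw [jlast_eq hp, coord_none, frame, Option.elim_none]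
    field_simp

end Transplantation

section Boundary

variable {n : ℕ} {φ : Pt n → ℝ}

theorem stdBubble_boundary_rpow (hn : (n : ℝ) ≠ 2) (z : EuclideanSpace ℝ (Fin (n - 1))) :
    stdBubble n (z, 0) ^ (2 / ((n : ℝ) - 2)) = (1 + ‖z‖ ^ 2)⁻¹ := by
  have hn' : (n : ℝ) - 2 ≠ 0 := sub_ne_zero.2 hn
  have hexp : -(((n : ℝ) - 2) / 2) * (2 / ((n : ℝ) - 2)) = -1 := by field_simp
  rw [stdBubble, ← Real.rpow_mul (by positivity), hexp, Real.rpow_neg_one, add_zero, one_pow]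

theorem derivWithin_vertical_eq_fderivWithin (z : EuclideanSpace ℝ (Fin (n - 1)))
    (hφ : DifferentiableWithinAt ℝ φ (closedHalf n) (z, 0)) :
    derivWithin (fun t : ℝ => φ (z, t)) (Set.Ici 0) 0 =
      fderivWithin ℝ φ (closedHalf n) (z, 0) (et n) := by
  have hline : HasDerivWithinAt (fun t : ℝ => ((z, t) : Pt n)) (et n) (Set.Ici 0) 0 :=
    ((hasDerivAt_const (0 : ℝ) z).prodMk (hasDerivAt_id (0 : ℝ))).hasDerivWithinAt
  exact (hφ.hasFDerivWithinAt.comp_hasDerivWithinAt (f := fun t : ℝ => ((z, t) : Pt n)) 0 hline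
    fun t ht => ht).derivWithin (uniqueDiffWithinAt_Ici 0)

theorem robin_boundary_condition (hn : (n : ℝ) ≠ 2) (z : EuclideanSpace ℝ (Fin (n - 1)))
    (hφ : DifferentiableWithinAt ℝ φ (closedHalf n) (z, 0))
    (hbdry : derivWithin (fun t : ℝ => φ (z, t)) (Set.Ici 0) 0 +
      n * stdBubble n (z, 0) ^ (2 / ((n : ℝ) - 2)) * φ (z, 0) = 0) :
    (1 + ‖z‖ ^ 2) * fderivWithin ℝ φ (closedHalf n) (z, 0) (et n) + n * φ (z, 0) = 0 := by
  have hz : 1 + ‖z‖ ^ 2 ≠ 0 := by positivity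
  rw [stdBubble_boundary_rpow hn, derivWithin_vertical_eq_fderivWithin z hφ] at hbdry
  field_simp at hbdry
  linarith

end Boundary

/-- any finite-energy `C²` solution of the linearized problem
`Δφ = 0` in `ℝ^n_+`, `∂φ/∂t + n U^{2/(n-2)} φ = 0` on `∂ℝ^n_+` is a linear
combination of `j_1, …, j_{n-1}, j_n`. -/
theorem stmt3 (n : ℕ) (hn : 3 ≤ n) (φ : Pt n → ℝ)
    (hreg : ContDiffOn ℝ 2 φ {p : Pt n | 0 ≤ p.2})
    (henergy : IntegrableOn
      (fun p : Pt n => (φ p) ^ 2 +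
        ((∑ i : Fin (n - 1), (pd (ez n i) φ p) ^ 2) + (pd (et n) φ p) ^ 2))
      (upperHalf n) volume)
    (hharm : ∀ p : Pt n, 0 < p.2 → lap n φ p = 0)
    (hbdry : ∀ z : EuclideanSpace ℝ (Fin (n - 1)),
      derivWithin (fun t : ℝ => φ (z, t)) (Set.Ici (0 : ℝ)) 0 +
        (n : ℝ) * (stdBubble n (z, 0)) ^ (2 / ((n : ℝ) - 2)) * φ (z, 0) = 0) :
    ∃ (c : Fin (n - 1) → ℝ) (cn : ℝ), ∀ p : Pt n, 0 < p.2 →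
      φ p = (∑ i : Fin (n - 1), c i * pd (ez n i) (stdBubble n) p) + cn * jlast n p := by
  have hn0 : n ≠ 0 := by omega
  have hn2 : (n : ℝ) ≠ 2 := by norm_cast; omega
  have hφ : ContDiffOn ℝ 2 φ (closedHalf n) := hreg
  have hdiff : DifferentiableOn ℝ φ (closedHalf n) := hφ.differentiableOn two_ne_zero
  have henergy' : IntegrableOn (fun p => φ p ^ 2 + ∑ a, pd (frame n a) φ p ^ 2) (upperHalf n) := by
    simpa only [Fintype.sum_option, frame, Option.elim, add_comm] using henergy
  have hweak : IsWeaklyDirichletHarmonic n (radialDefect n φ) :=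
    isWeaklyDirichletHarmonic_radialDefect hn0 hφ hharm fun z =>
      robin_boundary_condition hn2 z (hdiff (z, 0) (le_refl (0 : ℝ))) (hbdry z)
  have hdefect (p : Pt n) (hp : p ∈ upperHalf n) : radialDefect n φ p = 0 :=
    hweak.eq_zero hn0 (continuousOn_radialDefect hφ)
      (isLittleO_setIntegral_radialDefect hn hφ henergy') hp
  let A := fderiv ℝ (transplant n φ) 0
  refine ⟨fun i => -2 / ((n : ℝ) - 2) * A (ez n i), 2 / ((n : ℝ) - 2) * A (et n), fun p hp => ?_⟩
  exact (eq_stdBubble_mul_fderiv_transplant (hdiff.mono upperHalf_subset_closedHalf) hdefect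
    hp).trans (stdBubble_mul_clm_cayley_eq_sum hn2 A hp)
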